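/- arXiv:1901.01872 — 6 statements merged into one kernel-verified Lean document; each statement's English description precedes it below -/
import Mathlib

section
/- For every x ∈ ℝⁿ, the matrix D(x)^{−1/2} B D(x)^{−1/2} is symmetric positive semidefinite with all eigenvalues bounded above by ρ = 2(1−δ)/(2(1−δ)+αm) < 1; that is, 0 ⪯ D(x)^{−1/2} B D(x)^{−1/2} ⪯ ρ I. -/
open Matrix BigOperators

noncomputable section

/-- Second derivative of the `i`-th local objective. -/
def d2 {n : ℕ} (f : Fin n → ℝ → ℝ) (i : Fin n) (s : ℝ) : ℝ := deriv (deriv (f i)) s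

/-- Diagonal entries of the splitting matrix `D(x) = αG(x) + 2(I − W_d)`. -/
def dEntry {n : ℕ} (W : Matrix (Fin n) (Fin n) ℝ) (f : Fin n → ℝ → ℝ) (α : ℝ)
    (x : Fin n → ℝ) (i : Fin n) : ℝ :=
  α * d2 f i (x i) + 2 * (1 - W i i)

/-- `D(x)^{-1/2}`. -/
def Dinvhalf {n : ℕ} (W : Matrix (Fin n) (Fin n) ℝ) (f : Fin n → ℝ → ℝ) (α : ℝ)
    (x : Fin n → ℝ) : Matrix (Fin n) (Fin n) ℝ :=
  Matrix.diagonal (fun i => (Real.sqrt (dEntry W f α x i))⁻¹)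

/-- `B = I − 2W_d + W`. -/
def Bmat {n : ℕ} (W : Matrix (Fin n) (Fin n) ℝ) : Matrix (Fin n) (Fin n) ℝ :=
  1 - (2 : ℝ) • Matrix.diagonal (fun i => W i i) + W

theorem signed_lap_psd {n : ℕ} (A : Matrix (Fin n) (Fin n) ℝ) (hA : A.IsSymm)
    (h0 : ∀ i j, 0 ≤ A i j) (r : Fin n → ℝ) (hr : ∀ i, ∑ j, A i j = r i)
    (s : ℝ) (hs : s ^ 2 = 1) : (Matrix.diagonal r + s • A).PosSemidef := by
  refine Matrix.PosSemidef.of_dotProduct_mulVec_nonneg ?_ ?_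
  · rw [Matrix.IsHermitian, Matrix.conjTranspose_eq_transpose_of_trivial]
    simp [Matrix.transpose_add, Matrix.transpose_smul, hA.eq]
  · intro y
    have e1 : star y ⬝ᵥ ((Matrix.diagonal r + s • A) *ᵥ y)
        = ∑ i, ∑ j, A i j * (y i ^ 2 + s * y i * y j) := by
      rw [Matrix.add_mulVec, Matrix.smul_mulVec]
      simp only [dotProduct, Pi.add_apply, Matrix.mulVec_diagonal, Pi.smul_apply, smul_eq_mul,
        Matrix.mulVec, star_trivial]
      refine Finset.sum_congr rfl fun i _ => ?_
      simp only [mul_add, Finset.sum_add_distrib, ← Finset.sum_mul, hr, dotProduct,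
        Finset.mul_sum]
      congr 1
      · simp [Matrix.diagonal_apply]; ring
      · exact Finset.sum_congr rfl fun j _ => by ring
    have e2 : ∑ i, ∑ j, A i j * (y i ^ 2 + s * y i * y j)
        = ∑ i, ∑ j, A i j * (y j ^ 2 + s * y i * y j) := by
      rw [Finset.sum_comm]
      refine Finset.sum_congr rfl fun i _ => Finset.sum_congr rfl fun j _ => ?_
      rw [hA.apply i j]; ring
    have e3 : ∑ i, ∑ j, A i j * (y i ^ 2 + s * y i * y j)
          + ∑ i, ∑ j, A i j * (y j ^ 2 + s * y i * y j)
        = ∑ i, ∑ j, A i j * (y i + s * y j) ^ 2 := by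
      simp only [← Finset.sum_add_distrib]
      refine Finset.sum_congr rfl fun i _ => Finset.sum_congr rfl fun j _ => ?_
      linear_combination (- A i j * y j ^ 2) * hs
    have e4 : 0 ≤ ∑ i, ∑ j, A i j * (y i + s * y j) ^ 2 :=
      Finset.sum_nonneg fun i _ => Finset.sum_nonneg fun j _ =>
        mul_nonneg (h0 i j) (sq_nonneg _)
    rw [e1]; linarith

theorem stmt0 (n : ℕ) (hn : 1 ≤ n)
    (W : Matrix (Fin n) (Fin n) ℝ) (hWsymm : W.IsSymm)
    (hWnonneg : ∀ i j, 0 ≤ W i j) (hWlt : ∀ i j, W i j < 1)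
    (hWone : W.mulVec (fun _ => 1) = fun _ => 1)
    (hWnull : ∀ x : Fin n → ℝ, ((1 - W).mulVec x = 0 ↔ ∃ c : ℝ, x = fun _ => c))
    (δ Δ : ℝ) (hδ : 0 < δ) (hδΔ : δ ≤ Δ) (hΔ : Δ < 1)
    (hWdiag : ∀ i, δ ≤ W i i ∧ W i i ≤ Δ)
    (f : Fin n → ℝ → ℝ) (hf : ∀ i, ContDiff ℝ 2 (f i))
    (hconv : ∀ i, ConvexOn ℝ Set.univ (f i))
    (m M : ℝ) (hm : 0 < m) (hmM : m ≤ M)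
    (hd2 : ∀ i s, m ≤ d2 f i s ∧ d2 f i s ≤ M)
    (α : ℝ) (hα : 0 < α)
    (ρ : ℝ) (hρ : ρ = 2 * (1 - δ) / (2 * (1 - δ) + α * m)) :
    ρ < 1 ∧
      ∀ x : Fin n → ℝ,
        (Dinvhalf W f α x * Bmat W * Dinvhalf W f α x).PosSemidef ∧
        (ρ • (1 : Matrix (Fin n) (Fin n) ℝ)
            - Dinvhalf W f α x * Bmat W * Dinvhalf W f α x).PosSemidef := by
  have hδ1 : 0 < 1 - δ := by linarith
  have ham : 0 < α * m := mul_pos hα hm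
  have hden : 0 < 2 * (1 - δ) + α * m := by linarith
  have hρ0 : 0 ≤ ρ := by rw [hρ]; positivity
  have hρ1 : ρ < 1 := by rw [hρ, div_lt_one hden]; linarith
  have hρe : ρ * (2 * (1 - δ) + α * m) = 2 * (1 - δ) := by
    rw [hρ]; field_simp
  refine ⟨hρ1, fun x => ?_⟩
  set A : Matrix (Fin n) (Fin n) ℝ := W - Matrix.diagonal (fun i => W i i) with hAdef
  have hAs : A.IsSymm := by
    rw [Matrix.IsSymm, hAdef, Matrix.transpose_sub, hWsymm.eq, Matrix.diagonal_transpose]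
  have hA0 : ∀ i j, 0 ≤ A i j := by
    intro i j
    by_cases h : i = j
    · subst h; simp [hAdef]
    · simp [hAdef, h, hWnonneg]
  have hAr : ∀ i, ∑ j, A i j = 1 - W i i := by
    intro i
    have h1 := congrFun hWone i
    simp only [Matrix.mulVec, dotProduct, mul_one] at h1
    simp [hAdef, Finset.sum_sub_distrib, h1, Matrix.diagonal_apply]
  have P1 := signed_lap_psd A hAs hA0 _ hAr 1 (by norm_num)
  have P2 := signed_lap_psd A hAs hA0 _ hAr (-1) (by norm_num)
  have hB : Matrix.diagonal (fun i => 1 - W i i) + (1 : ℝ) • A = Bmat W := by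
    ext i j
    by_cases h : i = j
    · subst h; simp [hAdef, Bmat]; ring
    · simp [hAdef, Bmat, h]
  have hd : ∀ i, 0 < dEntry W f α x i := by
    intro i
    have := mul_pos hα (hm.trans_le (hd2 i (x i)).1)
    have := hWlt i i
    unfold dEntry; linarith
  have hSt : (Dinvhalf W f α x)ᴴ = Dinvhalf W f α x := by
    rw [Matrix.conjTranspose_eq_transpose_of_trivial, Dinvhalf, Matrix.diagonal_transpose]
  rw [hB] at P1
  constructor
  · have := P1.mul_mul_conjTranspose_same (Dinvhalf W f α x)
    rwa [hSt] at this
  · have P3 : (Matrix.diagonal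
        (fun i => ρ * dEntry W f α x i - 2 * (1 - W i i))).PosSemidef := by
      refine Matrix.PosSemidef.diagonal fun i => ?_
      have h1 : α * m ≤ α * d2 f i (x i) := mul_le_mul_of_nonneg_left (hd2 i (x i)).1 hα.le
      have h2 := mul_le_mul_of_nonneg_left h1 hρ0
      have h3 := mul_nonneg (sub_nonneg.2 hρ1.le) (sub_nonneg.2 (hWdiag i).1)
      simp only [dEntry, Pi.zero_apply]
      nlinarith
    have hC : (Matrix.diagonal (fun i => 1 - W i i) + (-1 : ℝ) • A)
        + Matrix.diagonal (fun i => ρ * dEntry W f α x i - 2 * (1 - W i i))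
        = ρ • Matrix.diagonal (dEntry W f α x) - Bmat W := by
      rw [← hB]
      ext i j
      by_cases h : i = j
      · subst h; simp; ring
      · simp [h]
    have P4 := (P2.add P3).mul_mul_conjTranspose_same (Dinvhalf W f α x)
    have hI : Dinvhalf W f α x * Matrix.diagonal (dEntry W f α x) * Dinvhalf W f α x = 1 := by
      rw [Dinvhalf, Matrix.diagonal_mul_diagonal, Matrix.diagonal_mul_diagonal,
        ← Matrix.diagonal_one]
      congr 1
      funext i
      have h1 := Real.sqrt_pos.2 (hd i)
      have h2 := Real.mul_self_sqrt (hd i).le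
      field_simp
      nlinarith
    rw [hSt, hC, Matrix.mul_sub, Matrix.sub_mul, Matrix.mul_smul, Matrix.smul_mul, hI] at P4
    exact P4
end
end

section
/- For every x ∈ ℝⁿ, the Hessian H(x) is invertible and its inverse is given by the convergent Neumann series H(x)^{−1} = D(x)^{−1/2} (Σ_{k=0}^∞ (D(x)^{−1/2} B D(x)^{−1/2})^k) D(x)^{−1/2}, where the series converges in the matrix operator norm. -/
open Matrix BigOperators

noncomputable section

/-- The diagonal matrix `G(x)` with `G(x)_ii = f_i''(x_i)`. -/
def Gmat {n : ℕ} (f : Fin n → ℝ → ℝ) (x : Fin n → ℝ) : Matrix (Fin n) (Fin n) ℝ :=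
  Matrix.diagonal (fun i => d2 f i (x i))

/-- The Hessian `H(x) = I − W + αG(x)` of the penalized objective. -/
def Hmat {n : ℕ} (W : Matrix (Fin n) (Fin n) ℝ) (f : Fin n → ℝ → ℝ) (α : ℝ)
    (x : Fin n → ℝ) : Matrix (Fin n) (Fin n) ℝ :=
  1 - W + α • Gmat f x

/-- `D(x) = αG(x) + 2(I − W_d)`. -/
def Dmat {n : ℕ} (W : Matrix (Fin n) (Fin n) ℝ) (f : Fin n → ℝ → ℝ) (α : ℝ)
    (x : Fin n → ℝ) : Matrix (Fin n) (Fin n) ℝ :=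
  Matrix.diagonal (dEntry W f α x)

/-- `D(x)^{1/2}`. -/
def Dhalf {n : ℕ} (W : Matrix (Fin n) (Fin n) ℝ) (f : Fin n → ℝ → ℝ) (α : ℝ)
    (x : Fin n → ℝ) : Matrix (Fin n) (Fin n) ℝ :=
  Matrix.diagonal (fun i => Real.sqrt (dEntry W f α x i))

/-- The approximate Hessian inverse
`Ĥ(x)⁻¹ = D(x)^{-1/2}(I + D(x)^{-1/2} B D(x)^{-1/2}) D(x)^{-1/2}`. -/
def Hhatinv {n : ℕ} (W : Matrix (Fin n) (Fin n) ℝ) (f : Fin n → ℝ → ℝ) (α : ℝ)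
    (x : Fin n → ℝ) : Matrix (Fin n) (Fin n) ℝ :=
  Dinvhalf W f α x * (1 + Dinvhalf W f α x * Bmat W * Dinvhalf W f α x) * Dinvhalf W f α x

/-- The penalized objective `F(x) = (1/2) xᵀ(I−W)x + α Σᵢ f_i(x_i)`. -/
def Fobj {n : ℕ} (W : Matrix (Fin n) (Fin n) ℝ) (f : Fin n → ℝ → ℝ) (α : ℝ)
    (x : Fin n → ℝ) : ℝ :=
  (1 / 2) * (x ⬝ᵥ ((1 - W).mulVec x)) + α * ∑ i, f i (x i)

/-- The gradient `g(x) = (I − W)x + α (f_i'(x_i))_i` of the penalized objective. -/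
def gvec {n : ℕ} (W : Matrix (Fin n) (Fin n) ℝ) (f : Fin n → ℝ → ℝ) (α : ℝ)
    (x : Fin n → ℝ) : Fin n → ℝ :=
  fun i => ((1 - W).mulVec x) i + α * deriv (f i) (x i)

/-- The asynchronous update `x^(i)`: agent `i` moves along the approximate Newton
direction with stepsize `ε / p i`; other coordinates are unchanged. -/
def upd {n : ℕ} (W : Matrix (Fin n) (Fin n) ℝ) (f : Fin n → ℝ → ℝ) (α : ℝ)
    (p : Fin n → ℝ) (ε : ℝ) (x : Fin n → ℝ) (i : Fin n) : Fin n → ℝ :=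
  Function.update x i (x i - (ε / p i) * ((Hhatinv W f α x).mulVec (gvec W f α x)) i)

/-- Euclidean norm on `ℝⁿ`. -/
def enorm {n : ℕ} (v : Fin n → ℝ) : ℝ := Real.sqrt (∑ i, v i ^ 2)

open scoped Matrix.Norms.L2Operator

/-- A nonnegative matrix contracting a positive vector has summable powers. -/
theorem summable_pow_aux {n : ℕ} (S : Matrix (Fin n) (Fin n) ℝ) (v : Fin n → ℝ) (r : ℝ)
    (hS : ∀ i j, 0 ≤ S i j) (hv : ∀ i, 0 < v i) (hr0 : 0 ≤ r) (hr1 : r < 1)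
    (h : ∀ i, ∑ j, S i j * v j ≤ r * v i) : Summable (fun k : ℕ => S ^ k) := by
  have key : ∀ k : ℕ, (∀ i j, 0 ≤ (S ^ k) i j) ∧ ∀ i, ∑ j, (S ^ k) i j * v j ≤ r ^ k * v i := by
    intro k
    induction k with
    | zero =>
      refine ⟨fun i j => ?_, fun i => ?_⟩
      · rw [pow_zero, Matrix.one_apply]; split_ifs <;> norm_num
      · simp [Matrix.one_apply]
    | succ k ih =>
      refine ⟨fun i j => ?_, fun i => ?_⟩
      · rw [pow_succ, Matrix.mul_apply]
        exact Finset.sum_nonneg fun l _ => mul_nonneg (ih.1 i l) (hS l j)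
      · calc ∑ j, (S ^ (k+1)) i j * v j = ∑ l, (S ^ k) i l * ∑ j, S l j * v j := by
              simp only [pow_succ, Matrix.mul_apply, Finset.sum_mul, Finset.mul_sum]
              rw [Finset.sum_comm]
              simp only [mul_assoc]
          _ ≤ ∑ l, (S ^ k) i l * (r * v l) :=
              Finset.sum_le_sum fun l _ => mul_le_mul_of_nonneg_left (h l) (ih.1 i l)
          _ = r * ∑ l, (S ^ k) i l * v l := by
              rw [Finset.mul_sum]; exact Finset.sum_congr rfl fun l _ => by ring
          _ ≤ r * (r ^ k * v i) := mul_le_mul_of_nonneg_left (ih.2 i) hr0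
          _ = r ^ (k+1) * v i := by ring
  refine Pi.summable.2 fun i => Pi.summable.2 fun j => ?_
  refine Summable.of_nonneg_of_le (fun k => (key k).1 i j) (fun k => ?_)
    ((summable_geometric_of_lt_one hr0 hr1).mul_right (v i / v j))
  rw [← mul_div_assoc, le_div_iff₀ (hv j)]
  exact (Finset.single_le_sum (f := fun j => (S ^ k) i j * v j)
    (fun l _ => mul_nonneg ((key k).1 i l) (hv l).le) (Finset.mem_univ j)).trans ((key k).2 i)

/-- The Hessian is invertible and its inverse is given by the Neumann series
`H(x)⁻¹ = D(x)^{-1/2} (Σ_k (D(x)^{-1/2} B D(x)^{-1/2})^k) D(x)^{-1/2}`, the series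
converging in the l2 (spectral) operator norm on matrices. -/
theorem stmt1 (n : ℕ) (hn : 1 ≤ n)
    (W : Matrix (Fin n) (Fin n) ℝ) (hWsymm : W.IsSymm)
    (hWnonneg : ∀ i j, 0 ≤ W i j) (hWlt : ∀ i j, W i j < 1)
    (hWone : W.mulVec (fun _ => 1) = fun _ => 1)
    (hWnull : ∀ x : Fin n → ℝ, ((1 - W).mulVec x = 0 ↔ ∃ c : ℝ, x = fun _ => c))
    (δ Δ : ℝ) (hδ : 0 < δ) (hδΔ : δ ≤ Δ) (hΔ : Δ < 1)
    (hWdiag : ∀ i, δ ≤ W i i ∧ W i i ≤ Δ)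
    (f : Fin n → ℝ → ℝ) (hf : ∀ i, ContDiff ℝ 2 (f i))
    (hconv : ∀ i, ConvexOn ℝ Set.univ (f i))
    (m M : ℝ) (hm : 0 < m) (hmM : m ≤ M)
    (hd2 : ∀ i s, m ≤ d2 f i s ∧ d2 f i s ≤ M)
    (α : ℝ) (hα : 0 < α)
    : ∀ x : Fin n → ℝ,
      IsUnit (Hmat W f α x) ∧
      ∃ T : Matrix (Fin n) (Fin n) ℝ,
        HasSum (fun k : ℕ => (Dinvhalf W f α x * Bmat W * Dinvhalf W f α x) ^ k) T ∧
        (Hmat W f α x)⁻¹ = Dinvhalf W f α x * T * Dinvhalf W f α x := by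
  intro x
  have hw1 : ∀ i, W i i < 1 := fun i => hWlt i i
  have hd : ∀ i, 0 < dEntry W f α x i := fun i => by
    have := mul_pos hα (hm.trans_le (hd2 i (x i)).1)
    have := hw1 i
    unfold dEntry; linarith
  have hv : ∀ i, 0 < Real.sqrt (dEntry W f α x i) := fun i => Real.sqrt_pos.2 (hd i)
  have hBnn : ∀ i j, 0 ≤ Bmat W i j := by
    intro i j
    by_cases hij : i = j
    · subst hij
      have := hw1 i
      simp [Bmat]; linarith
    · simpa [Bmat, hij] using hWnonneg i j
  have hWrow : ∀ i, ∑ j, W i j = 1 := fun i => by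
    simpa [Matrix.mulVec, dotProduct] using congrFun hWone i
  have hBrow : ∀ i, ∑ j, Bmat W i j = 2 * (1 - W i i) := by
    intro i
    simp [Bmat, Finset.sum_add_distrib, Finset.sum_sub_distrib, hWrow, Matrix.one_apply,
      Matrix.diagonal_apply]
    ring
  have hSij : ∀ i j, (Dinvhalf W f α x * Bmat W * Dinvhalf W f α x) i j =
      (Real.sqrt (dEntry W f α x i))⁻¹ * Bmat W i j * (Real.sqrt (dEntry W f α x j))⁻¹ := by
    intro i j
    simp [Dinvhalf, Matrix.mul_diagonal, Matrix.diagonal_mul]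
  have hαm : 0 < α * m := mul_pos hα hm
  have hsum : Summable (fun k : ℕ => (Dinvhalf W f α x * Bmat W * Dinvhalf W f α x) ^ k) := by
    refine summable_pow_aux _ (fun i => Real.sqrt (dEntry W f α x i)) (2 / (α * m + 2)) ?_ hv
      (by positivity) (by rw [div_lt_one (by positivity)]; linarith) ?_
    · intro i j
      rw [hSij]
      exact mul_nonneg (mul_nonneg (inv_nonneg.2 (hv i).le) (hBnn i j)) (inv_nonneg.2 (hv j).le)
    · intro i
      have e : ∑ j, (Dinvhalf W f α x * Bmat W * Dinvhalf W f α x) i j *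
          Real.sqrt (dEntry W f α x j) = (Real.sqrt (dEntry W f α x i))⁻¹ * (2 * (1 - W i i)) := by
        rw [← hBrow, Finset.mul_sum]
        refine Finset.sum_congr rfl fun j _ => ?_
        rw [hSij, mul_assoc, inv_mul_cancel₀ (hv j).ne', mul_one]
      rw [e, inv_mul_le_iff₀ (hv i)]
      have e2 : Real.sqrt (dEntry W f α x i) * (2 / (α * m + 2) * Real.sqrt (dEntry W f α x i))
          = 2 * dEntry W f α x i / (α * m + 2) := by
        have := Real.mul_self_sqrt (hd i).le
        calc _ = 2 * (Real.sqrt (dEntry W f α x i) * Real.sqrt (dEntry W f α x i)) / (α * m + 2) := by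
              ring
          _ = _ := by rw [this]
      rw [e2, le_div_iff₀ (by positivity)]
      have h1 : α * m ≤ α * d2 f i (x i) := mul_le_mul_of_nonneg_left (hd2 i (x i)).1 hα.le
      have h2 := mul_nonneg hαm.le (hWnonneg i i)
      unfold dEntry
      nlinarith
  have hT := hsum.one_sub_mul_tsum_pow
  have hDD : Dhalf W f α x * Dinvhalf W f α x = 1 := by
    rw [Dhalf, Dinvhalf, Matrix.diagonal_mul_diagonal, ← Matrix.diagonal_one]
    congr 1; funext i; exact mul_inv_cancel₀ (hv i).ne'
  have hDD' : Dinvhalf W f α x * Dhalf W f α x = 1 := mul_eq_one_comm.1 hDD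
  have hD2 : Dhalf W f α x * Dhalf W f α x = Dmat W f α x := by
    rw [Dhalf, Dmat, Matrix.diagonal_mul_diagonal]
    congr 1; funext i; exact Real.mul_self_sqrt (hd i).le
  have hHDB : Hmat W f α x = Dmat W f α x - Bmat W := by
    ext i j
    by_cases hij : i = j
    · subst hij
      simp [Hmat, Gmat, Dmat, Bmat, dEntry]; ring
    · simp [Hmat, Gmat, Dmat, Bmat, hij]
  have hH : Hmat W f α x = Dhalf W f α x *
      (1 - Dinvhalf W f α x * Bmat W * Dinvhalf W f α x) * Dhalf W f α x := by
    have : Dhalf W f α x * (Dinvhalf W f α x * Bmat W * Dinvhalf W f α x) * Dhalf W f α x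
        = (Dhalf W f α x * Dinvhalf W f α x) * Bmat W * (Dinvhalf W f α x * Dhalf W f α x) := by
      simp only [mul_assoc]
    rw [mul_sub, sub_mul, this, hDD, hDD', mul_one, mul_one, one_mul, hD2, hHDB]
  generalize hTd : (∑' k : ℕ, (Dinvhalf W f α x * Bmat W * Dinvhalf W f α x) ^ k) = T at hT
  have hprod : Hmat W f α x * (Dinvhalf W f α x * T * Dinvhalf W f α x) = 1 := by
    rw [hH]
    calc _ = Dhalf W f α x * ((1 - Dinvhalf W f α x * Bmat W * Dinvhalf W f α x) *
          ((Dhalf W f α x * Dinvhalf W f α x) * T)) * Dinvhalf W f α x := by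
            simp only [mul_assoc]
      _ = 1 := by rw [hDD, one_mul, hT, mul_one, hDD]
  exact ⟨IsUnit.of_mul_eq_one _ hprod, T, hTd ▸ hsum.hasSum, Matrix.inv_eq_right_inv hprod⟩
end
end

section
/- For every x ∈ ℝⁿ the following eigenvalue bounds hold: αm I ⪯ H(x) ⪯ (2(1−δ)+αM) I; (2(1−Δ)+αm) I ⪯ D(x) ⪯ (2(1−δ)+αM) I; and 0 ⪯ B ⪯ 2(1−δ) I. -/
open Matrix BigOperators

noncomputable section

theorem aux_psd {n : ℕ} (A : Matrix (Fin n) (Fin n) ℝ) (hA : ∀ i j, A i j = A j i)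
    (h0 : ∀ i j, 0 ≤ A i j) (s : ℝ) (hs : s ^ 2 = 1) :
    (Matrix.diagonal (fun i => ∑ j, A i j) + s • A).PosSemidef := by
  apply Matrix.PosSemidef.of_dotProduct_mulVec_nonneg
  · ext i j
    by_cases h : i = j
    · subst h; simp
    · have h' : j ≠ i := fun e => h e.symm
      simp [Matrix.diagonal_apply, h, h', hA i j]
  · intro x
    have e : star x ⬝ᵥ ((Matrix.diagonal (fun i => ∑ j, A i j) + s • A) *ᵥ x)
        = ∑ i, ∑ j, (A i j * x i ^ 2 + s * A i j * x i * x j) := by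
      rw [Matrix.add_mulVec]
      simp only [dotProduct, Pi.add_apply, Matrix.mulVec_diagonal, star_trivial]
      refine Finset.sum_congr rfl fun i _ => ?_
      simp only [Matrix.mulVec, dotProduct, Matrix.smul_apply, smul_eq_mul]
      rw [Finset.sum_add_distrib, mul_add, Finset.sum_mul, Finset.mul_sum, Finset.mul_sum]
      congr 1 <;> exact Finset.sum_congr rfl fun j _ => by ring
    have e2 : ∑ i, ∑ j, (A i j * x i ^ 2 + s * A i j * x i * x j)
        = ∑ i, ∑ j, (A i j * x j ^ 2 + s * A i j * x i * x j) := by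
      rw [Finset.sum_comm]
      refine Finset.sum_congr rfl fun i _ => Finset.sum_congr rfl fun j _ => ?_
      rw [hA j i]; ring
    have e3 : 0 ≤ ∑ i, ∑ j, A i j * (x i + s * x j) ^ 2 :=
      Finset.sum_nonneg fun i _ => Finset.sum_nonneg fun j _ =>
        mul_nonneg (h0 i j) (sq_nonneg _)
    have e4 : ∑ i, ∑ j, A i j * (x i + s * x j) ^ 2
        = ∑ i, ∑ j, (A i j * x i ^ 2 + s * A i j * x i * x j)
        + ∑ i, ∑ j, (A i j * x j ^ 2 + s * A i j * x i * x j) := by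
      simp only [← Finset.sum_add_distrib]
      refine Finset.sum_congr rfl fun i _ => Finset.sum_congr rfl fun j _ => ?_
      linear_combination (A i j * x j ^ 2) * hs
    rw [e]
    linarith

theorem aux_diag {n : ℕ} (d : Fin n → ℝ) (h : ∀ i, 0 ≤ d i) :
    (Matrix.diagonal d).PosSemidef := Matrix.PosSemidef.diagonal h

/-- Eigenvalue bounds: `αm I ⪯ H(x) ⪯ (2(1−δ)+αM) I`,
`(2(1−Δ)+αm) I ⪯ D(x) ⪯ (2(1−δ)+αM) I`, and `0 ⪯ B ⪯ 2(1−δ) I`. -/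
theorem stmt3 (n : ℕ) (hn : 1 ≤ n)
    (W : Matrix (Fin n) (Fin n) ℝ) (hWsymm : W.IsSymm)
    (hWnonneg : ∀ i j, 0 ≤ W i j) (hWlt : ∀ i j, W i j < 1)
    (hWone : W.mulVec (fun _ => 1) = fun _ => 1)
    (hWnull : ∀ x : Fin n → ℝ, ((1 - W).mulVec x = 0 ↔ ∃ c : ℝ, x = fun _ => c))
    (δ Δ : ℝ) (hδ : 0 < δ) (hδΔ : δ ≤ Δ) (hΔ : Δ < 1)
    (hWdiag : ∀ i, δ ≤ W i i ∧ W i i ≤ Δ)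
    (f : Fin n → ℝ → ℝ) (hf : ∀ i, ContDiff ℝ 2 (f i))
    (hconv : ∀ i, ConvexOn ℝ Set.univ (f i))
    (m M : ℝ) (hm : 0 < m) (hmM : m ≤ M)
    (hd2 : ∀ i s, m ≤ d2 f i s ∧ d2 f i s ≤ M)
    (α : ℝ) (hα : 0 < α)
    : ∀ x : Fin n → ℝ,
      (Hmat W f α x - (α * m) • (1 : Matrix (Fin n) (Fin n) ℝ)).PosSemidef ∧
      ((2 * (1 - δ) + α * M) • (1 : Matrix (Fin n) (Fin n) ℝ) - Hmat W f α x).PosSemidef ∧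
      (Dmat W f α x - (2 * (1 - Δ) + α * m) • (1 : Matrix (Fin n) (Fin n) ℝ)).PosSemidef ∧
      ((2 * (1 - δ) + α * M) • (1 : Matrix (Fin n) (Fin n) ℝ) - Dmat W f α x).PosSemidef ∧
      (Bmat W).PosSemidef ∧
      ((2 * (1 - δ)) • (1 : Matrix (Fin n) (Fin n) ℝ) - Bmat W).PosSemidef := by
  have hsym : ∀ i j, W i j = W j i := fun i j => hWsymm.apply j i
  have hrow : ∀ i, ∑ j, W i j = 1 := by
    intro i
    have := congrFun hWone i
    simpa [Matrix.mulVec, dotProduct] using this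
  have hL : (1 - W).PosSemidef := by
    have := aux_psd W hsym hWnonneg (-1) (by norm_num)
    simp only [hrow] at this
    convert this using 1
    ext i j
    simp [Matrix.one_apply, Matrix.diagonal_apply, sub_eq_add_neg]
  have hB : (Bmat W).PosSemidef := by
    have := aux_psd (Matrix.of fun i j => if i = j then 0 else W i j)
      (fun i j => by simp only [Matrix.of_apply, eq_comm (a := i), hsym i j])
      (fun i j => by rw [Matrix.of_apply]; split_ifs; exacts [le_rfl, hWnonneg i j]) 1 (by norm_num)
    convert this using 1
    ext i j
    have h1 : ∑ k, (if i = k then 0 else W i k) = 1 - W i i := by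
      have : ∀ k, (if i = k then 0 else W i k) = W i k - (if i = k then W i k else 0) := by
        intro k; split_ifs <;> simp
      simp only [this, Finset.sum_sub_distrib, hrow]
      simp
    by_cases h : i = j
    · subst h
      simp [Bmat, h1]; ring
    · simp [Bmat, h]
  intro x
  have g1 : ∀ i, 0 ≤ α * (d2 f i (x i) - m) := fun i =>
    mul_nonneg hα.le (by linarith [(hd2 i (x i)).1])
  have g2 : ∀ i, 0 ≤ α * (M - d2 f i (x i)) := fun i =>
    mul_nonneg hα.le (by linarith [(hd2 i (x i)).2])
  have key : ∀ (P Q : Matrix (Fin n) (Fin n) ℝ) (d : Fin n → ℝ), P.PosSemidef →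
      (∀ i, 0 ≤ d i) → Q = P + Matrix.diagonal d → Q.PosSemidef := by
    intro P Q d hP hd hQ
    rw [hQ]; exact hP.add (aux_diag d hd)
  refine ⟨key _ _ (fun i => α * (d2 f i (x i) - m)) hL g1 ?_,
    key _ _ (fun i => α * (M - d2 f i (x i)) + 2 * (W i i - δ)) hB
      (fun i => by linarith [g2 i, (hWdiag i).1]) ?_,
    key _ _ (fun i => α * (d2 f i (x i) - m) + 2 * (Δ - W i i)) Matrix.PosSemidef.zero
      (fun i => by linarith [g1 i, (hWdiag i).2]) ?_,
    key _ _ (fun i => α * (M - d2 f i (x i)) + 2 * (W i i - δ)) Matrix.PosSemidef.zero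
      (fun i => by linarith [g2 i, (hWdiag i).1]) ?_, hB,
    key _ _ (fun i => 2 * (W i i - δ)) hL (fun i => by linarith [(hWdiag i).1]) ?_⟩
  all_goals
    ext i j
    by_cases h : i = j
    · subst h
      simp [Bmat, Hmat, Dmat, Gmat, dEntry]; try ring
    · simp [Bmat, Hmat, Dmat, Gmat, dEntry, h]
end
end

section
/- For every x ∈ ℝⁿ, the approximate Hessian inverse satisfies λ I ⪯ Ĥ(x)⁻¹ ⪯ Λ I, where λ = 1/(2(1−δ)+αM) and Λ = (1+ρ)/(2(1−Δ)+αm) with ρ = 2(1−δ)/(2(1−δ)+αm). -/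
open Matrix BigOperators

noncomputable section

lemma aux_sum {n : ℕ} (W : Matrix (Fin n) (Fin n) ℝ) (hWsymm : W.IsSymm)
    (hrow : ∀ i, ∑ j, W i j = 1) (s : ℝ) (v : Fin n → ℝ) :
    ∑ i, ∑ j, W i j * (v i + s * v j) ^ 2 =
      (1 + s ^ 2) * ∑ i, v i ^ 2 + 2 * s * ∑ i, ∑ j, v i * W i j * v j := by
  have h1 : ∑ i, ∑ j, W i j * v i ^ 2 = ∑ i, v i ^ 2 := by
    refine Finset.sum_congr rfl fun i _ => ?_
    rw [← Finset.sum_mul, hrow, one_mul]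
  have h2 : ∑ i, ∑ j, W i j * v j ^ 2 = ∑ i, v i ^ 2 := by
    rw [Finset.sum_comm, ← h1]
    refine Finset.sum_congr rfl fun i _ => Finset.sum_congr rfl fun j _ => ?_
    rw [hWsymm.apply i j]
  have h3 : ∑ i, ∑ j, W i j * (v i + s * v j) ^ 2 = ∑ i, ∑ j, W i j * v i ^ 2
      + s ^ 2 * ∑ i, ∑ j, W i j * v j ^ 2 + 2 * s * ∑ i, ∑ j, v i * W i j * v j := by
    simp only [Finset.mul_sum, ← Finset.sum_add_distrib]
    refine Finset.sum_congr rfl fun i _ => Finset.sum_congr rfl fun j _ => ?_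
    ring
  rw [h3, h1, h2]; ring

lemma aux_W {n : ℕ} (W : Matrix (Fin n) (Fin n) ℝ) (v : Fin n → ℝ) :
    v ⬝ᵥ W *ᵥ v = ∑ i, ∑ j, v i * W i j * v j := by
  simp only [dotProduct, mulVec, Finset.mul_sum, mul_assoc]

lemma aux_one_sub {n : ℕ} (W : Matrix (Fin n) (Fin n) ℝ) (hWsymm : W.IsSymm)
    (hWnonneg : ∀ i j, 0 ≤ W i j) (hrow : ∀ i, ∑ j, W i j = 1) :
    (1 - W).PosSemidef := by
  refine PosSemidef.of_dotProduct_mulVec_nonneg ?_ fun v => ?_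
  · ext i j
    simp [conjTranspose_apply, hWsymm.apply i j, one_apply, eq_comm]
  · have h := aux_sum W hWsymm hrow (-1) v
    have h0 : 0 ≤ ∑ i, ∑ j, W i j * (v i + (-1) * v j) ^ 2 :=
      Finset.sum_nonneg fun i _ => Finset.sum_nonneg fun j _ =>
        mul_nonneg (hWnonneg i j) (sq_nonneg _)
    have h1 : v ⬝ᵥ v = ∑ i, v i ^ 2 := by simp [dotProduct, sq]
    rw [star_trivial, sub_mulVec, dotProduct_sub, one_mulVec, aux_W, h1]
    linarith

lemma aux_B {n : ℕ} (W : Matrix (Fin n) (Fin n) ℝ) (hWsymm : W.IsSymm)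
    (hWnonneg : ∀ i j, 0 ≤ W i j) (hrow : ∀ i, ∑ j, W i j = 1) :
    (Bmat W).PosSemidef := by
  refine PosSemidef.of_dotProduct_mulVec_nonneg ?_ fun v => ?_
  · ext i j
    by_cases hij : i = j
    · subst hij; simp [Bmat]
    · simp [Bmat, conjTranspose_apply, hWsymm.apply i j, one_apply, diagonal_apply, hij,
        Ne.symm hij]
  · have h := aux_sum W hWsymm hrow 1 v
    have h0 : ∑ i, 4 * (W i i * v i ^ 2) ≤ ∑ i, ∑ j, W i j * (v i + 1 * v j) ^ 2 := by
      refine Finset.sum_le_sum fun i _ => ?_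
      have := Finset.single_le_sum (f := fun j => W i j * (v i + 1 * v j) ^ 2)
        (fun j _ => mul_nonneg (hWnonneg i j) (sq_nonneg _)) (Finset.mem_univ i)
      refine le_trans (le_of_eq ?_) this
      ring
    have h1 : v ⬝ᵥ v = ∑ i, v i ^ 2 := by simp [dotProduct, sq]
    have h2 : v ⬝ᵥ (diagonal fun i => W i i) *ᵥ v = ∑ i, W i i * v i ^ 2 := by
      simp only [dotProduct, mulVec_diagonal]
      exact Finset.sum_congr rfl fun i _ => by ring
    rw [← Finset.mul_sum] at h0
    rw [star_trivial, Bmat, add_mulVec, sub_mulVec, smul_mulVec, dotProduct_add, dotProduct_sub,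
      dotProduct_smul, one_mulVec, h2, aux_W, h1, smul_eq_mul]
    linarith

lemma aux_H {n : ℕ} (W : Matrix (Fin n) (Fin n) ℝ) (f : Fin n → ℝ → ℝ) (α : ℝ)
    (x : Fin n → ℝ) (hd : ∀ i, 0 < dEntry W f α x i) :
    Hhatinv W f α x = diagonal (fun i => (dEntry W f α x i)⁻¹) +
      diagonal (fun i => (dEntry W f α x i)⁻¹) * Bmat W *
        diagonal (fun i => (dEntry W f α x i)⁻¹) := by
  have h : Dinvhalf W f α x * Dinvhalf W f α x = diagonal (fun i => (dEntry W f α x i)⁻¹) := by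
    rw [Dinvhalf, diagonal_mul_diagonal]
    congr 1; ext i
    rw [← mul_inv, Real.mul_self_sqrt (hd i).le]
  rw [← h, Hhatinv]
  noncomm_ring

lemma aux_conj {n : ℕ} (A : Matrix (Fin n) (Fin n) ℝ) (hA : A.PosSemidef) (e : Fin n → ℝ) :
    (diagonal e * A * diagonal e).PosSemidef := by
  have := hA.conjTranspose_mul_mul_same (diagonal e)
  simpa [diagonal_conjTranspose] using this

/-- Bounds on the approximate Hessian inverse: `λ I ⪯ Ĥ(x)⁻¹ ⪯ Λ I`. -/
theorem stmt4 (n : ℕ) (hn : 1 ≤ n)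
    (W : Matrix (Fin n) (Fin n) ℝ) (hWsymm : W.IsSymm)
    (hWnonneg : ∀ i j, 0 ≤ W i j) (hWlt : ∀ i j, W i j < 1)
    (hWone : W.mulVec (fun _ => 1) = fun _ => 1)
    (hWnull : ∀ x : Fin n → ℝ, ((1 - W).mulVec x = 0 ↔ ∃ c : ℝ, x = fun _ => c))
    (δ Δ : ℝ) (hδ : 0 < δ) (hδΔ : δ ≤ Δ) (hΔ : Δ < 1)
    (hWdiag : ∀ i, δ ≤ W i i ∧ W i i ≤ Δ)
    (f : Fin n → ℝ → ℝ) (hf : ∀ i, ContDiff ℝ 2 (f i))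
    (hconv : ∀ i, ConvexOn ℝ Set.univ (f i))
    (m M : ℝ) (hm : 0 < m) (hmM : m ≤ M)
    (hd2 : ∀ i s, m ≤ d2 f i s ∧ d2 f i s ≤ M)
    (α : ℝ) (hα : 0 < α)
    (ρ lam Lam : ℝ) (hρ : ρ = 2 * (1 - δ) / (2 * (1 - δ) + α * m))
    (hlam : lam = 1 / (2 * (1 - δ) + α * M))
    (hLam : Lam = (1 + ρ) / (2 * (1 - Δ) + α * m)) :
    ∀ x : Fin n → ℝ,
      (Hhatinv W f α x - lam • (1 : Matrix (Fin n) (Fin n) ℝ)).PosSemidef ∧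
      (Lam • (1 : Matrix (Fin n) (Fin n) ℝ) - Hhatinv W f α x).PosSemidef := by
  intro x
  have hrow : ∀ i, ∑ j, W i j = 1 := fun i => by
    have := congrFun hWone i
    simpa [mulVec, dotProduct] using this
  have hαm : 0 < α * m := mul_pos hα hm
  have hlo : ∀ i, α * m + 2 * (1 - W i i) ≤ dEntry W f α x i := fun i => by
    have := mul_le_mul_of_nonneg_left (hd2 i (x i)).1 hα.le
    unfold dEntry; linarith
  have hhi : ∀ i, dEntry W f α x i ≤ 2 * (1 - δ) + α * M := fun i => by
    have := mul_le_mul_of_nonneg_left (hd2 i (x i)).2 hα.le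
    have := (hWdiag i).1
    unfold dEntry; linarith
  have hd : ∀ i, 0 < dEntry W f α x i := fun i => by
    have := hlo i
    have := (hWdiag i).2
    linarith
  rw [aux_H W f α x hd]
  constructor
  · have hdiag : (diagonal (fun i => (dEntry W f α x i)⁻¹ - lam)).PosSemidef := by
      rw [posSemidef_diagonal_iff]
      intro i
      rw [sub_nonneg, hlam, one_div]
      exact inv_anti₀ (hd i) (hhi i)
    convert hdiag.add (aux_conj _ (aux_B W hWsymm hWnonneg hrow)
      (fun i => (dEntry W f α x i)⁻¹)) using 1
    rw [smul_one_eq_diagonal, add_sub_right_comm, diagonal_sub]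
  · have hdiag : (diagonal (fun i => Lam - (dEntry W f α x i)⁻¹ -
        (dEntry W f α x i)⁻¹ * (2 * (1 - W i i)) * (dEntry W f α x i)⁻¹)).PosSemidef := by
      rw [posSemidef_diagonal_iff]
      intro i
      have hd' := hd i
      have hl := hlo i
      obtain ⟨hw1, hw2⟩ := hWdiag i
      generalize dEntry W f α x i = d at *
      have hb : (2 * (1 - W i i)) * d⁻¹ ≤ ρ := by
        rw [hρ, ← div_eq_mul_inv, div_le_div_iff₀ hd' (by linarith)]
        nlinarith
      have hb0 : 0 ≤ (2 * (1 - W i i)) * d⁻¹ :=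
        mul_nonneg (by linarith) (inv_nonneg.2 hd'.le)
      have hinv : d⁻¹ ≤ (2 * (1 - Δ) + α * m)⁻¹ := inv_anti₀ (by linarith) (by linarith)
      have h1 : (1 + (2 * (1 - W i i)) * d⁻¹) * d⁻¹ ≤ (1 + ρ) * (2 * (1 - Δ) + α * m)⁻¹ :=
        mul_le_mul (by linarith) hinv (inv_nonneg.2 hd'.le) (by linarith)
      rw [hLam, div_eq_mul_inv]
      show 0 ≤ _
      linarith
    convert hdiag.add (aux_conj _ (aux_one_sub W hWsymm hWnonneg hrow)
      (fun i => (dEntry W f α x i)⁻¹)) using 1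
    ext i j
    simp only [smul_one_eq_diagonal, Bmat, Matrix.sub_apply, Matrix.add_apply, diagonal_mul, mul_diagonal,
      Matrix.smul_apply, smul_eq_mul, one_apply, diagonal_apply]
    by_cases hij : i = j
    · subst hij; simp only [if_true]; ring
    · simp only [hij, if_false]; ring
end
end

section
/- If the stepsize parameter satisfies 0 < ε ≤ 2π(λ/Λ)², then the sequence of function values F(x(t)) generated by the asynchronous network Newton process converges almost surely to the optimal value F*. -/
open Matrix BigOperators

noncomputable section

lemma aux_tangent (φ : ℝ → ℝ) (hφ : ContDiff ℝ 2 φ) (h2 : ∀ s, 0 ≤ deriv (deriv φ) s) (x y : ℝ) :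
    φ x + deriv φ x * (y - x) ≤ φ y := by
  have hd : Differentiable ℝ φ := hφ.differentiable (by norm_num)
  have hd' : Differentiable ℝ (deriv φ) := by
    have : ContDiff ℝ 1 (deriv φ) := ((contDiff_succ_iff_deriv (n := 1)).1 hφ).2.2
    exact this.differentiable (by norm_num)
  have hmono : Monotone (deriv φ) := monotone_of_deriv_nonneg hd' h2
  have hc : ConvexOn ℝ Set.univ φ := hmono.convexOn_univ_of_deriv hd
  rcases lt_trichotomy x y with h | h | h
  · have := hc.deriv_le_slope (Set.mem_univ x) (Set.mem_univ y) h (hd x)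
    rw [slope_def_field, le_div_iff₀ (by linarith)] at this
    linarith
  · subst h; simp
  · have := hc.slope_le_deriv (Set.mem_univ y) (Set.mem_univ x) h (hd x)
    rw [slope_def_field, div_le_iff₀ (by linarith)] at this
    linarith

lemma aux_comb (f : ℝ → ℝ) (hf : ContDiff ℝ 2 f) (a b : ℝ)
    (h : ∀ s, 0 ≤ a + b * deriv (deriv f) s) (x t : ℝ) :
    0 ≤ a / 2 * t ^ 2 + b * (f (x + t) - f x - deriv f x * t) := by
  have hd : Differentiable ℝ f := hf.differentiable (by norm_num)
  have hd' : Differentiable ℝ (deriv f) := by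
    have : ContDiff ℝ 1 (deriv f) := ((contDiff_succ_iff_deriv (n := 1)).1 hf).2.2
    exact this.differentiable (by norm_num)
  have e1 : deriv (fun s => a / 2 * s ^ 2 + b * f s) = fun s => a * s + b * deriv f s := by
    funext s
    have : HasDerivAt (fun s => a / 2 * s ^ 2 + b * f s) (a / 2 * (2 * s) + b * deriv f s) s := by
      have h1 : HasDerivAt (fun s : ℝ => s ^ 2) (2 * s) s := by
        simpa using hasDerivAt_pow 2 s
      exact (h1.const_mul _).add ((hd s).hasDerivAt.const_mul b)
    rw [this.deriv]; ring
  have e2 : deriv (deriv (fun s => a / 2 * s ^ 2 + b * f s))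
      = fun s => a + b * deriv (deriv f) s := by
    rw [e1]
    funext s
    have : HasDerivAt (fun s => a * s + b * deriv f s) (a * 1 + b * deriv (deriv f) s) s :=
      ((hasDerivAt_id s).const_mul _).add ((hd' s).hasDerivAt.const_mul b)
    rw [this.deriv]; ring
  have := aux_tangent (fun s => a / 2 * s ^ 2 + b * f s) (by fun_prop) (by rw [e2]; exact h) x (x + t)
  rw [e1] at this
  nlinarith

lemma aux_row {n : ℕ} (W : Matrix (Fin n) (Fin n) ℝ)
    (hWone : W.mulVec (fun _ => 1) = fun _ => 1) (i : Fin n) : ∑ j, W i j = 1 := by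
  have := congrFun hWone i
  simpa [Matrix.mulVec, dotProduct] using this

lemma aux_sq {n : ℕ} (W : Matrix (Fin n) (Fin n) ℝ) (hWsymm : W.IsSymm)
    (hWone : W.mulVec (fun _ => 1) = fun _ => 1) (z : Fin n → ℝ) (c : ℝ) :
    ∑ i, ∑ j, W i j * (z i + c * z j) ^ 2
      = (1 + c ^ 2) * ∑ i, z i ^ 2 + 2 * c * (z ⬝ᵥ W.mulVec z) := by
  have e1 : ∑ i, ∑ j, W i j * z i ^ 2 = ∑ i, z i ^ 2 := by
    refine Finset.sum_congr rfl fun i _ => ?_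
    rw [← Finset.sum_mul, aux_row W hWone, one_mul]
  have e2 : ∑ i, ∑ j, W i j * z j ^ 2 = ∑ i, z i ^ 2 := by
    rw [Finset.sum_comm, ← e1]
    refine Finset.sum_congr rfl fun i _ => Finset.sum_congr rfl fun j _ => ?_
    rw [hWsymm.apply i j]
  have e3 : z ⬝ᵥ W.mulVec z = ∑ i, ∑ j, W i j * (z i * z j) := by
    simp only [Matrix.mulVec, dotProduct, Finset.mul_sum]
    refine Finset.sum_congr rfl fun i _ => Finset.sum_congr rfl fun j _ => ?_
    ring
  have : ∑ i, ∑ j, W i j * (z i + c * z j) ^ 2 = ∑ i, ∑ j, W i j * z i ^ 2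
      + c ^ 2 * ∑ i, ∑ j, W i j * z j ^ 2 + 2 * c * ∑ i, ∑ j, W i j * (z i * z j) := by
    simp only [Finset.mul_sum, ← Finset.sum_add_distrib]
    refine Finset.sum_congr rfl fun i _ => Finset.sum_congr rfl fun j _ => ?_
    ring
  rw [this, e1, e2, e3]; ring

lemma aux_upper {n : ℕ} (W : Matrix (Fin n) (Fin n) ℝ) (hWsymm : W.IsSymm)
    (hWnonneg : ∀ i j, 0 ≤ W i j)
    (hWone : W.mulVec (fun _ => 1) = fun _ => 1) (z : Fin n → ℝ) :
    z ⬝ᵥ W.mulVec z ≤ ∑ i, z i ^ 2 := by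
  have h := aux_sq W hWsymm hWone z (-1)
  have : 0 ≤ ∑ i, ∑ j, W i j * (z i + (-1) * z j) ^ 2 :=
    Finset.sum_nonneg fun i _ => Finset.sum_nonneg fun j _ => mul_nonneg (hWnonneg i j) (sq_nonneg _)
  linarith

lemma aux_lower {n : ℕ} (W : Matrix (Fin n) (Fin n) ℝ) (hWsymm : W.IsSymm)
    (hWnonneg : ∀ i j, 0 ≤ W i j)
    (hWone : W.mulVec (fun _ => 1) = fun _ => 1) (z : Fin n → ℝ) :
    2 * ∑ i, W i i * z i ^ 2 - ∑ i, z i ^ 2 ≤ z ⬝ᵥ W.mulVec z := by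
  have h := aux_sq W hWsymm hWone z 1
  have : ∑ i, 4 * (W i i * z i ^ 2) ≤ ∑ i, ∑ j, W i j * (z i + 1 * z j) ^ 2 := by
    refine Finset.sum_le_sum fun i _ => ?_
    have := Finset.single_le_sum (f := fun j => W i j * (z i + 1 * z j) ^ 2)
      (fun j _ => mul_nonneg (hWnonneg i j) (sq_nonneg _)) (Finset.mem_univ i)
    refine le_trans (le_of_eq ?_) this
    ring
  rw [← Finset.mul_sum] at this
  linarith

lemma aux_expand {n : ℕ} (W : Matrix (Fin n) (Fin n) ℝ) (hWsymm : W.IsSymm)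
    (f : Fin n → ℝ → ℝ) (α : ℝ) (x h : Fin n → ℝ) :
    Fobj W f α (x + h) = Fobj W f α x + h ⬝ᵥ gvec W f α x
      + 1 / 2 * (h ⬝ᵥ (1 - W).mulVec h)
      + α * ∑ i, (f i (x i + h i) - f i (x i) - deriv (f i) (x i) * h i) := by
  have hs : x ⬝ᵥ (1 - W).mulVec h = h ⬝ᵥ (1 - W).mulVec x := by
    rw [Matrix.dotProduct_mulVec, ← Matrix.mulVec_transpose, dotProduct_comm]
    congr 2
    rw [Matrix.transpose_sub, hWsymm.eq, Matrix.transpose_one]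
  have hg : h ⬝ᵥ gvec W f α x = h ⬝ᵥ (1 - W).mulVec x + α * ∑ i, deriv (f i) (x i) * h i := by
    simp only [gvec, dotProduct, Finset.mul_sum, ← Finset.sum_add_distrib]
    refine Finset.sum_congr rfl fun i _ => ?_
    ring
  rw [hg]
  simp only [Fobj, Matrix.mulVec_add, dotProduct_add, add_dotProduct, hs, Pi.add_apply,
    Finset.sum_sub_distrib]
  ring

lemma aux_pl {n : ℕ} (W : Matrix (Fin n) (Fin n) ℝ) (hWsymm : W.IsSymm)
    (hWnonneg : ∀ i j, 0 ≤ W i j)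
    (hWone : W.mulVec (fun _ => 1) = fun _ => 1)
    (f : Fin n → ℝ → ℝ) (hf : ∀ i, ContDiff ℝ 2 (f i)) (m α : ℝ) (hm : 0 < m)
    (hd2 : ∀ i s, m ≤ d2 f i s) (hα : 0 < α) (x y : Fin n → ℝ) :
    2 * (α * m) * (Fobj W f α x - Fobj W f α y) ≤ ∑ i, gvec W f α x i ^ 2 := by
  set h := y - x with hh
  have hy : y = x + h := by simp [hh]
  rw [hy, aux_expand W hWsymm]
  have h1 : 0 ≤ h ⬝ᵥ (1 - W).mulVec h := by
    have := aux_upper W hWsymm hWnonneg hWone h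
    rw [Matrix.sub_mulVec, Matrix.one_mulVec, dotProduct_sub]
    have e : h ⬝ᵥ h = ∑ i, h i ^ 2 := by simp [dotProduct, sq]
    linarith
  have h2 : ∑ i, m / 2 * h i ^ 2 ≤ ∑ i, (f i (x i + h i) - f i (x i) - deriv (f i) (x i) * h i) := by
    refine Finset.sum_le_sum fun i _ => ?_
    have := aux_comb (f i) (hf i) (-m) 1 (fun s => by have := hd2 i s; unfold d2 at this; linarith)
      (x i) (h i)
    linarith
  have h3 : 0 ≤ ∑ i, (gvec W f α x i + α * m * h i) ^ 2 := Finset.sum_nonneg fun i _ => sq_nonneg _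
  have h4 : ∑ i, (gvec W f α x i + α * m * h i) ^ 2 = ∑ i, gvec W f α x i ^ 2
      + 2 * (α * m) * (h ⬝ᵥ gvec W f α x) + 2 * (α * m) * (α * ∑ i, m / 2 * h i ^ 2) := by
    simp only [dotProduct, Finset.mul_sum, ← Finset.sum_add_distrib]
    refine Finset.sum_congr rfl fun i _ => ?_
    ring
  have hp : 0 < α * m := by positivity
  have h5 := mul_le_mul_of_nonneg_left h2 hα.le
  nlinarith [mul_le_mul_of_nonneg_left h5 hp.le, mul_nonneg hp.le h1]

lemma aux_descent {n : ℕ} (W : Matrix (Fin n) (Fin n) ℝ) (hWsymm : W.IsSymm)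
    (f : Fin n → ℝ → ℝ) (hf : ∀ i, ContDiff ℝ 2 (f i)) (M α : ℝ)
    (hd2 : ∀ i s, d2 f i s ≤ M) (hα : 0 < α) (x : Fin n → ℝ) (i : Fin n) (t : ℝ) :
    Fobj W f α (Function.update x i (x i + t)) ≤ Fobj W f α x + t * gvec W f α x i
      + (1 - W i i + α * M) / 2 * t ^ 2 := by
  have hy : Function.update x i (x i + t) = x + Pi.single i t := by
    funext j
    by_cases h : j = i
    · subst h; simp
    · simp [h]
  rw [hy, aux_expand W hWsymm]
  have h2 : ∑ j, (f j (x j + (Pi.single i t : Fin n → ℝ) j) - f j (x j)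
      - deriv (f j) (x j) * (Pi.single i t : Fin n → ℝ) j)
      = f i (x i + t) - f i (x i) - deriv (f i) (x i) * t := by
    rw [Finset.sum_eq_single i]
    · simp
    · intro j _ hj; simp [hj]
    · simp
  rw [h2]
  have := aux_comb (f i) (hf i) M (-1) (fun s => by have := hd2 i s; unfold d2 at this; linarith)
      (x i) t
  simp only [single_dotProduct, Matrix.mulVec_single, Matrix.sub_apply, Matrix.one_apply_eq,
    Pi.smul_apply, Matrix.col_apply, MulOpposite.smul_eq_mul_unop, MulOpposite.unop_op]
  nlinarith [mul_nonneg hα.le this]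

lemma aux_Happly {n : ℕ} (W : Matrix (Fin n) (Fin n) ℝ) (f : Fin n → ℝ → ℝ) (α : ℝ)
    (x : Fin n → ℝ) (hD : ∀ i, 0 < dEntry W f α x i) (i j : Fin n) :
    Hhatinv W f α x i j = (dEntry W f α x i)⁻¹ * (Matrix.diagonal (dEntry W f α x) i j + Bmat W i j)
      * (dEntry W f α x j)⁻¹ := by
  unfold Hhatinv Dinvhalf
  rw [Matrix.mul_diagonal, Matrix.diagonal_mul, Matrix.add_apply, Matrix.mul_diagonal,
    Matrix.diagonal_mul]
  have h : ∀ i, (dEntry W f α x i)⁻¹ = (√(dEntry W f α x i))⁻¹ * (√(dEntry W f α x i))⁻¹ := by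
    intro i
    rw [← mul_inv, Real.mul_self_sqrt (hD i).le]
  have h' : ∀ i, √(dEntry W f α x i) ≠ 0 := fun i => (Real.sqrt_pos.2 (hD i)).ne'
  by_cases hij : i = j
  · subst hij
    rw [Matrix.diagonal_apply_eq, Matrix.one_apply_eq]
    have e := Real.mul_self_sqrt (hD i).le
    rw [h i]
    have := h' i
    set s := √(dEntry W f α x i)
    rw [← e]
    field_simp
  · rw [Matrix.diagonal_apply_ne _ hij, Matrix.one_apply_ne hij, h i, h j]
    ring

lemma aux_Hquad {n : ℕ} (W : Matrix (Fin n) (Fin n) ℝ) (f : Fin n → ℝ → ℝ) (α : ℝ)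
    (x : Fin n → ℝ) (hD : ∀ i, 0 < dEntry W f α x i) (v u : Fin n → ℝ)
    (hu : ∀ i, v i = dEntry W f α x i * u i) :
    v ⬝ᵥ (Hhatinv W f α x).mulVec v = ∑ i, dEntry W f α x i * u i ^ 2
      + (∑ i, u i ^ 2 - 2 * ∑ i, W i i * u i ^ 2 + u ⬝ᵥ W.mulVec u) := by
  have e1 : v ⬝ᵥ (Hhatinv W f α x).mulVec v
      = u ⬝ᵥ (Matrix.diagonal (dEntry W f α x) + Bmat W).mulVec u := by
    simp only [dotProduct, Matrix.mulVec, Finset.mul_sum]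
    refine Finset.sum_congr rfl fun i _ => Finset.sum_congr rfl fun j _ => ?_
    rw [aux_Happly W f α x hD, hu i, hu j, Matrix.add_apply]
    have := (hD i).ne'
    have := (hD j).ne'
    field_simp
  rw [e1, Bmat]
  simp only [Matrix.add_mulVec, Matrix.sub_mulVec, Matrix.smul_mulVec, dotProduct_add,
    dotProduct_sub, dotProduct_smul, Matrix.one_mulVec, smul_eq_mul]
  have a1 : ∀ d : Fin n → ℝ, u ⬝ᵥ (Matrix.diagonal d).mulVec u = ∑ i, d i * u i ^ 2 := by
    intro d
    simp only [dotProduct, Matrix.mulVec_diagonal]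
    exact Finset.sum_congr rfl fun i _ => by ring
  have a2 : u ⬝ᵥ u = ∑ i, u i ^ 2 := by simp [dotProduct, sq]
  rw [a1, a1, a2]

lemma aux_Hsymm {n : ℕ} (W : Matrix (Fin n) (Fin n) ℝ) (hWsymm : W.IsSymm)
    (f : Fin n → ℝ → ℝ) (α : ℝ)
    (x : Fin n → ℝ) : (Hhatinv W f α x).IsSymm := by
  have hB : (Bmat W)ᵀ = Bmat W := by simp [Bmat, hWsymm.eq]
  simp [Matrix.IsSymm, Hhatinv, Dinvhalf, Matrix.transpose_mul, hB, Matrix.mul_assoc]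

lemma aux_cs {n : ℕ} (S : Matrix (Fin n) (Fin n) ℝ) (hS : S.IsSymm) (L : ℝ) (hL : 0 < L)
    (h0 : ∀ v, 0 ≤ v ⬝ᵥ S.mulVec v) (h1 : ∀ v, v ⬝ᵥ S.mulVec v ≤ L * ∑ i, v i ^ 2)
    (g : Fin n → ℝ) : ∑ i, (S.mulVec g) i ^ 2 ≤ L * (g ⬝ᵥ S.mulVec g) := by
  set v := S.mulVec g with hv
  have a := h0 (L • g - v)
  have b := h1 v
  have e : g ⬝ᵥ S.mulVec v = ∑ i, v i ^ 2 := by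
    rw [Matrix.dotProduct_mulVec, ← Matrix.mulVec_transpose, hS.eq, ← hv]
    simp [dotProduct, sq]
  have e' : v ⬝ᵥ v = ∑ i, v i ^ 2 := by simp [dotProduct, sq]
  simp only [Matrix.mulVec_sub, Matrix.mulVec_smul, dotProduct_sub, sub_dotProduct, smul_dotProduct,
    dotProduct_smul, smul_eq_mul, e, ← hv, e'] at a
  have : 0 ≤ L * (L * (g ⬝ᵥ v) - ∑ i, v i ^ 2) := by nlinarith
  have := nonneg_of_mul_nonneg_right this hL
  linarith

lemma aux_contract {n : ℕ}
    (W : Matrix (Fin n) (Fin n) ℝ) (hWsymm : W.IsSymm)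
    (hWnonneg : ∀ i j, 0 ≤ W i j)
    (hWone : W.mulVec (fun _ => 1) = fun _ => 1)
    (δ Δ : ℝ) (hδΔ : δ ≤ Δ) (hΔ : Δ < 1)
    (hWdiag : ∀ i, δ ≤ W i i ∧ W i i ≤ Δ)
    (f : Fin n → ℝ → ℝ) (hf : ∀ i, ContDiff ℝ 2 (f i))
    (m M : ℝ) (hm : 0 < m) (hmM : m ≤ M)
    (hd2 : ∀ i s, m ≤ d2 f i s ∧ d2 f i s ≤ M)
    (α : ℝ) (hα : 0 < α)
    (p : Fin n → ℝ) (pmin : ℝ) (hpmin : 0 < pmin)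
    (hp : ∀ i, pmin ≤ p i) (hpsum : ∑ i, p i = 1)
    (xstar : Fin n → ℝ) (hmin : ∀ y, Fobj W f α xstar ≤ Fobj W f α y)
    (ρ lam Lam : ℝ) (hρ : ρ = 2 * (1 - δ) / (2 * (1 - δ) + α * m))
    (hlam : lam = 1 / (2 * (1 - δ) + α * M))
    (hLam : Lam = (1 + ρ) / (2 * (1 - Δ) + α * m))
    (ε : ℝ) (hε : 0 < ε) (hεle : ε ≤ 2 * pmin * (lam / Lam) ^ 2) :
    ∃ q : ℝ, 0 ≤ q ∧ q < 1 ∧ ∀ x, ∑ i, p i * (Fobj W f α (upd W f α p ε x i) - Fobj W f α xstar)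
      ≤ q * (Fobj W f α x - Fobj W f α xstar) := by
  have hαm : 0 < α * m := by positivity
  have hαmM : α * m ≤ α * M := by gcongr
  have hδ1 : 0 < 1 - δ := by linarith
  have hρ0 : 0 < ρ := by rw [hρ]; positivity
  have hlam0 : 0 < lam := by rw [hlam]; apply one_div_pos.2; linarith
  have hden : 0 < 2 * (1 - Δ) + α * m := by linarith
  have hLam0 : 0 < Lam := by rw [hLam]; apply div_pos <;> linarith
  have hlL : lam ≤ Lam := by
    rw [hlam, hLam]
    apply div_le_div₀ <;> linarith
  have hlam1 : lam * (2 * (1 - δ) + α * M) = 1 := by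
    rw [hlam]; apply one_div_mul_cancel; linarith
  have hLam1 : Lam * (2 * (1 - Δ) + α * m) = 1 + ρ := by
    rw [hLam]; exact div_mul_cancel₀ _ hden.ne'
  have hρ1 : ρ * (2 * (1 - δ) + α * m) = 2 * (1 - δ) := by
    rw [hρ]; apply div_mul_cancel₀; linarith
  set L' := 1 - δ + α * M with hL'
  have hL'0 : 0 < L' := by linarith
  have hr : 0 < 1 - L' * lam := by nlinarith
  refine ⟨max 0 (1 - ε * (1 - L' * lam) * lam * (2 * (α * m))), le_max_left _ _,
    max_lt one_pos (by have : 0 < ε * (1 - L' * lam) * lam * (2 * (α * m)) := by positivity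
                       linarith), fun x => ?_⟩
  -- bounds on the diagonal
  have hDlo : ∀ i, 2 * (1 - W i i) + α * m ≤ dEntry W f α x i := fun i => by
    unfold dEntry
    have := mul_le_mul_of_nonneg_left (hd2 i (x i)).1 hα.le
    linarith
  have hDhi : ∀ i, dEntry W f α x i ≤ 2 * (1 - δ) + α * M := fun i => by
    unfold dEntry
    have := mul_le_mul_of_nonneg_left (hd2 i (x i)).2 hα.le
    linarith [(hWdiag i).1]
  have hDlo' : ∀ i, 2 * (1 - Δ) + α * m ≤ dEntry W f α x i := fun i => by
    linarith [(hWdiag i).2, hDlo i]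
  have hD : ∀ i, 0 < dEntry W f α x i := fun i => lt_of_lt_of_le hden (hDlo' i)
  have hlo : ∀ v : Fin n → ℝ, lam * ∑ i, v i ^ 2 ≤ v ⬝ᵥ (Hhatinv W f α x).mulVec v := by
    intro v
    obtain ⟨u, hu⟩ : ∃ u : Fin n → ℝ, ∀ i, v i = dEntry W f α x i * u i :=
      ⟨fun i => v i / dEntry W f α x i, fun i => (mul_div_cancel₀ _ (hD i).ne').symm⟩
    rw [aux_Hquad W f α x hD v u hu, Finset.mul_sum]
    have h1 := aux_lower W hWsymm hWnonneg hWone u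
    have h2 : ∑ i, lam * v i ^ 2 ≤ ∑ i, dEntry W f α x i * u i ^ 2 := by
      refine Finset.sum_le_sum fun i _ => ?_
      have h3 : lam * dEntry W f α x i ≤ 1 := by
        rw [← hlam1]; exact mul_le_mul_of_nonneg_left (hDhi i) hlam0.le
      rw [hu i]
      calc lam * (dEntry W f α x i * u i) ^ 2
          = lam * dEntry W f α x i * (dEntry W f α x i * u i ^ 2) := by ring
        _ ≤ 1 * (dEntry W f α x i * u i ^ 2) :=
          mul_le_mul_of_nonneg_right h3 (mul_nonneg (hD i).le (sq_nonneg _))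
        _ = _ := one_mul _
    linarith
  have hhi : ∀ v : Fin n → ℝ, v ⬝ᵥ (Hhatinv W f α x).mulVec v ≤ Lam * ∑ i, v i ^ 2 := by
    intro v
    obtain ⟨u, hu⟩ : ∃ u : Fin n → ℝ, ∀ i, v i = dEntry W f α x i * u i :=
      ⟨fun i => v i / dEntry W f α x i, fun i => (mul_div_cancel₀ _ (hD i).ne').symm⟩
    rw [aux_Hquad W f α x hD v u hu]
    have h1 := aux_upper W hWsymm hWnonneg hWone u
    have h2 : ∑ i, (dEntry W f α x i * u i ^ 2 + (2 * u i ^ 2 - 2 * (W i i * u i ^ 2)))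
        ≤ ∑ i, Lam * v i ^ 2 := by
      refine Finset.sum_le_sum fun i _ => ?_
      have h3 : 2 * (1 - W i i) ≤ ρ * dEntry W f α x i := by
        have := mul_le_mul_of_nonneg_left (hDlo i) hρ0.le
        have hw := (hWdiag i).1
        have hρlt : ρ ≤ 1 := by
          rw [hρ]; apply (div_le_one (by linarith)).2; linarith
        nlinarith [mul_nonneg (sub_nonneg.2 hρlt) (sub_nonneg.2 hw)]
      have h4 : 1 + ρ ≤ Lam * dEntry W f α x i := by
        rw [← hLam1]; exact mul_le_mul_of_nonneg_left (hDlo' i) hLam0.le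
      rw [hu i]
      calc dEntry W f α x i * u i ^ 2 + (2 * u i ^ 2 - 2 * (W i i * u i ^ 2))
          = (dEntry W f α x i + 2 * (1 - W i i)) * u i ^ 2 := by ring
        _ ≤ (dEntry W f α x i + ρ * dEntry W f α x i) * u i ^ 2 := by gcongr
        _ = (1 + ρ) * (dEntry W f α x i * u i ^ 2) := by ring
        _ ≤ (Lam * dEntry W f α x i) * (dEntry W f α x i * u i ^ 2) :=
          mul_le_mul_of_nonneg_right h4 (mul_nonneg (hD i).le (sq_nonneg _))
        _ = _ := by ring
    rw [Finset.sum_add_distrib, Finset.sum_sub_distrib, ← Finset.mul_sum, ← Finset.mul_sum,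
      ← Finset.mul_sum] at h2
    linarith
  set g := gvec W f α x with hg
  set d := (Hhatinv W f α x).mulVec g with hd
  have hcs : ∑ i, d i ^ 2 ≤ Lam * (g ⬝ᵥ d) :=
    aux_cs _ (aux_Hsymm W hWsymm f α x) Lam hLam0
      (fun v => le_trans (mul_nonneg hlam0.le (Finset.sum_nonneg fun i _ => sq_nonneg _)) (hlo v))
      hhi g
  have hA := hlo g
  rw [← hd] at hA
  have hpl := aux_pl W hWsymm hWnonneg hWone f hf m α hm (fun i s => (hd2 i s).1) hα x xstar
  rw [← hg] at hpl
  have hstep : ∀ i, p i * (Fobj W f α (upd W f α p ε x i) - Fobj W f α xstar)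
      ≤ p i * (Fobj W f α x - Fobj W f α xstar) - ε * (g i * d i)
        + ε ^ 2 * L' / (2 * pmin) * d i ^ 2 := by
    intro i
    have hpi : 0 < p i := lt_of_lt_of_le hpmin (hp i)
    have h1 := aux_descent W hWsymm f hf M α (fun i s => (hd2 i s).2) hα x i (-(ε / p i * d i))
    rw [← sub_eq_add_neg, ← hg] at h1
    have h2 : (1 - W i i + α * M) / 2 * (-(ε / p i * d i)) ^ 2 ≤
       L' / 2 * (ε / p i * d i) ^ 2 := by
      rw [neg_sq]
      gcongr
      linarith [(hWdiag i).1]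
    have h3 : p i * (Fobj W f α (upd W f α p ε x i) - Fobj W f α xstar)
      ≤ p i * (Fobj W f α x - Fobj W f α xstar - ε / p i * d i * g i
        + L' / 2 * (ε / p i * d i) ^ 2) := by
      apply mul_le_mul_of_nonneg_left _ hpi.le
      unfold upd
      linarith
    refine h3.trans ?_
    have h4 : p i * (Fobj W f α x - Fobj W f α xstar - ε / p i * d i * g i
        + L' / 2 * (ε / p i * d i) ^ 2) = p i * (Fobj W f α x - Fobj W f α xstar) - ε * (g i * d i)
        + ε ^ 2 * L' / (2 * p i) * d i ^ 2 := by
      field_simp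
    rw [h4]
    have := hp i
    gcongr
  have hsum := Finset.sum_le_sum (s := Finset.univ) fun i _ => hstep i
  have hV : 0 ≤ Fobj W f α x - Fobj W f α xstar := sub_nonneg.2 (hmin x)
  refine hsum.trans ?_
  rw [Finset.sum_add_distrib, Finset.sum_sub_distrib, ← Finset.sum_mul, ← Finset.mul_sum,
    ← Finset.mul_sum, hpsum, one_mul]
  have hA' : ∑ i, g i * d i = g ⬝ᵥ d := rfl
  rw [hA']
  refine le_trans ?_ (mul_le_mul_of_nonneg_right (le_max_right _ _) hV)
  have hA0 : 0 ≤ g ⬝ᵥ d := le_trans (by positivity) hA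
  have hθ : ε * L' / (2 * pmin) * Lam ≤ L' * lam := by
    calc ε * L' / (2 * pmin) * Lam ≤ (2 * pmin * (lam / Lam) ^ 2) * L' / (2 * pmin) * Lam := by gcongr
      _ = L' * lam * (lam / Lam) := by field_simp
      _ ≤ L' * lam * 1 := by
        gcongr
        exact (div_le_one hLam0).2 hlL
      _ = L' * lam := mul_one _
  have h5 : ε ^ 2 * L' / (2 * pmin) * ∑ i, d i ^ 2 ≤ ε * (L' * lam) * (g ⬝ᵥ d) := by
    calc ε ^ 2 * L' / (2 * pmin) * ∑ i, d i ^ 2 ≤ ε ^ 2 * L' / (2 * pmin) * (Lam * (g ⬝ᵥ d)) := by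
          gcongr
      _ = ε * (ε * L' / (2 * pmin) * Lam) * (g ⬝ᵥ d) := by ring
      _ ≤ _ := by gcongr
  have h6 : lam * (2 * (α * m) * (Fobj W f α x - Fobj W f α xstar)) ≤ g ⬝ᵥ d :=
    le_trans (mul_le_mul_of_nonneg_left hpl hlam0.le) hA
  have h7 := mul_le_mul_of_nonneg_left h6 (mul_nonneg hε.le hr.le)
  linarith

open MeasureTheory ProbabilityTheory in
lemma aux_prob {n : ℕ} {E : Type*} (U : E → Fin n → E) (φ : E → ENNReal) (p : Fin n → ℝ)
    (q : ENNReal) (hq : q < 1) (hφ : ∀ x, φ x ≠ ⊤)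
    (hcon : ∀ x, ∑ i, ENNReal.ofReal (p i) * φ (U x i) ≤ q * φ x)
    {Ω : Type*} [MeasurableSpace Ω] (μ : Measure Ω) [IsProbabilityMeasure μ]
    (I : ℕ → Ω → Fin n) (hImeas : ∀ t, Measurable (I t))
    (hIindep : iIndepFun I μ)
    (hIdist : ∀ t i, μ {ω | I t ω = i} = ENNReal.ofReal (p i))
    (x0 : E) (X : ℕ → Ω → E) (hX0 : ∀ ω, X 0 ω = x0)
    (hXsucc : ∀ (t : ℕ) (ω : Ω), X (t + 1) ω = U (X t ω) (I (t + 1) ω)) :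
    ∀ᵐ ω ∂μ, Filter.Tendsto (fun t => φ (X t ω)) Filter.atTop (nhds 0) := by
  have hfac : ∀ t, ∃ Φ : ((Finset.range (t + 1)) → Fin n) → E, ∀ ω,
      X t ω = Φ (fun k => I k ω) := by
    intro t
    induction t with
    | zero => exact ⟨fun _ => x0, hX0⟩
    | succ t ih =>
      obtain ⟨Φ, hΦ⟩ := ih
      refine ⟨fun z => U (Φ (fun k => z ⟨k, Finset.mem_range.2
        ((Finset.mem_range.1 k.2).trans (Nat.lt_succ_self _))⟩))
        (z ⟨t + 1, Finset.mem_range.2 (Nat.lt_succ_self _)⟩), fun ω => ?_⟩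
      rw [hXsucc, hΦ]
  have hmeas : ∀ t (ψ : E → ENNReal), Measurable (fun ω => ψ (X t ω)) := by
    intro t ψ
    obtain ⟨Φ, hΦ⟩ := hfac t
    simp only [hΦ]
    exact (measurable_of_finite (fun z => ψ (Φ z))).comp
      (measurable_pi_lambda _ fun k => hImeas k)
  have hind : ∀ t (ψ : E → ENNReal) (χ : Fin n → ENNReal),
      ∫⁻ ω, χ (I (t + 1) ω) * ψ (X t ω) ∂μ
        = (∫⁻ ω, χ (I (t + 1) ω) ∂μ) * ∫⁻ ω, ψ (X t ω) ∂μ := by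
    intro t ψ χ
    obtain ⟨Φ, hΦ⟩ := hfac t
    have h0 := hIindep.indepFun_finset (Finset.range (t + 1)) {t + 1} (by simp) hImeas
    have h1 := h0.comp (φ := fun z => ψ (Φ z)) (ψ := fun z => χ (z ⟨t + 1, by simp⟩))
      (measurable_of_finite _) (measurable_of_finite _)
    refine lintegral_mul_eq_lintegral_mul_lintegral_of_indepFun
      ((measurable_of_finite χ).comp (hImeas (t + 1))) (hmeas t ψ) ?_
    simp only [hΦ]
    exact h1.symm
  have hstep : ∀ t, ∫⁻ ω, φ (X (t + 1) ω) ∂μ ≤ q * ∫⁻ ω, φ (X t ω) ∂μ := by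
    intro t
    have e1 : ∀ ω, φ (X (t + 1) ω)
        = ∑ i, (if I (t + 1) ω = i then 1 else 0) * φ (U (X t ω) i) := by
      intro ω
      simp [hXsucc]
    have e2 : ∀ i, ∫⁻ ω, (if I (t + 1) ω = i then 1 else 0) ∂μ = ENNReal.ofReal (p i) := by
      intro i
      rw [← hIdist (t + 1) i]
      refine Eq.trans (lintegral_congr fun ω => ?_) (lintegral_indicator_one (μ := μ)
        (s := {ω | I (t + 1) ω = i}) (hImeas (t + 1) (measurableSet_singleton i)))
      simp [Set.indicator_apply]
    have e3 : ∀ i, Measurable fun ω => (if I (t + 1) ω = i then (1 : ENNReal) else 0) := fun i =>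
      (measurable_of_finite (fun k : Fin n => if k = i then (1 : ENNReal) else 0)).comp
        (hImeas (t + 1))
    calc ∫⁻ ω, φ (X (t + 1) ω) ∂μ
        = ∑ i, ∫⁻ ω, (if I (t + 1) ω = i then 1 else 0) * φ (U (X t ω) i) ∂μ := by
          simp only [e1]
          exact lintegral_finsetSum _ fun i _ => (e3 i).mul (hmeas t fun y => φ (U y i))
      _ = ∑ i, ENNReal.ofReal (p i) * ∫⁻ ω, φ (U (X t ω) i) ∂μ := by
          refine Finset.sum_congr rfl fun i _ => ?_
          rw [hind t (fun y => φ (U y i)) (fun k => if k = i then 1 else 0), e2]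
      _ = ∫⁻ ω, ∑ i, ENNReal.ofReal (p i) * φ (U (X t ω) i) ∂μ := by
          rw [lintegral_finsetSum _ fun i _ => (hmeas t fun y => φ (U y i)).const_mul _]
          refine Finset.sum_congr rfl fun i _ => ?_
          rw [lintegral_const_mul _ (hmeas t fun y => φ (U y i))]
      _ ≤ ∫⁻ ω, q * φ (X t ω) ∂μ := lintegral_mono fun ω => hcon _
      _ = _ := lintegral_const_mul _ (hmeas t φ)
  have hgeo : ∀ t, ∫⁻ ω, φ (X t ω) ∂μ ≤ q ^ t * φ x0 := by
    intro t
    induction t with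
    | zero => simp [hX0]
    | succ t ih =>
      calc _ ≤ q * ∫⁻ ω, φ (X t ω) ∂μ := hstep t
        _ ≤ q * (q ^ t * φ x0) := by gcongr
        _ = _ := by rw [pow_succ]; ring
  have hfin : ∫⁻ ω, ∑' t, φ (X t ω) ∂μ ≠ ⊤ := by
    rw [lintegral_tsum fun t => (hmeas t φ).aemeasurable]
    refine ne_top_of_le_ne_top ?_ (ENNReal.tsum_le_tsum hgeo)
    rw [ENNReal.tsum_mul_right, ENNReal.tsum_geometric]
    refine ENNReal.mul_ne_top ?_ (hφ _)
    exact ENNReal.inv_ne_top.2 (tsub_pos_of_lt hq).ne'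
  filter_upwards [ae_lt_top (Measurable.tsum fun t => hmeas t φ) hfin] with ω hω
  exact ENNReal.tendsto_atTop_zero_of_tsum_ne_top hω.ne

/-- Almost sure convergence of the function values of the asynchronous network
Newton iterates to the optimal value `F*`, for `0 < ε ≤ 2π(λ/Λ)²`. -/
theorem stmt6 (n : ℕ) (hn : 1 ≤ n)
    (W : Matrix (Fin n) (Fin n) ℝ) (hWsymm : W.IsSymm)
    (hWnonneg : ∀ i j, 0 ≤ W i j) (hWlt : ∀ i j, W i j < 1)
    (hWone : W.mulVec (fun _ => 1) = fun _ => 1)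
    (hWnull : ∀ x : Fin n → ℝ, ((1 - W).mulVec x = 0 ↔ ∃ c : ℝ, x = fun _ => c))
    (δ Δ : ℝ) (hδ : 0 < δ) (hδΔ : δ ≤ Δ) (hΔ : Δ < 1)
    (hWdiag : ∀ i, δ ≤ W i i ∧ W i i ≤ Δ)
    (f : Fin n → ℝ → ℝ) (hf : ∀ i, ContDiff ℝ 2 (f i))
    (hconv : ∀ i, ConvexOn ℝ Set.univ (f i))
    (m M : ℝ) (hm : 0 < m) (hmM : m ≤ M)
    (hd2 : ∀ i s, m ≤ d2 f i s ∧ d2 f i s ≤ M)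
    (α : ℝ) (hα : 0 < α)
    (p : Fin n → ℝ) (pmin pmax : ℝ) (hpmin : 0 < pmin) (hpmax : pmax < 1)
    (hp : ∀ i, pmin ≤ p i ∧ p i ≤ pmax) (hpsum : ∑ i, p i = 1)
    (xstar : Fin n → ℝ) (hmin : ∀ y, Fobj W f α xstar ≤ Fobj W f α y)
    (ρ lam Lam : ℝ) (hρ : ρ = 2 * (1 - δ) / (2 * (1 - δ) + α * m))
    (hlam : lam = 1 / (2 * (1 - δ) + α * M))
    (hLam : Lam = (1 + ρ) / (2 * (1 - Δ) + α * m))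
    (ε : ℝ) (hε : 0 < ε) (hεle : ε ≤ 2 * pmin * (lam / Lam) ^ 2)
    (Ω : Type*) [MeasurableSpace Ω] (μ : MeasureTheory.Measure Ω)
    [MeasureTheory.IsProbabilityMeasure μ]
    (I : ℕ → Ω → Fin n) (hImeas : ∀ t, Measurable (I t))
    (hIindep : ProbabilityTheory.iIndepFun I μ)
    (hIdist : ∀ t i, μ {ω | I t ω = i} = ENNReal.ofReal (p i))
    (x0 : Fin n → ℝ) (X : ℕ → Ω → Fin n → ℝ)
    (hX0 : ∀ ω, X 0 ω = x0)
    (hXsucc : ∀ (t : ℕ) (ω : Ω), X (t + 1) ω = upd W f α p ε (X t ω) (I (t + 1) ω))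
    : ∀ᵐ ω ∂μ,
      Filter.Tendsto (fun t => Fobj W f α (X t ω)) Filter.atTop
        (nhds (Fobj W f α xstar)) := by
  obtain ⟨q, hq0, hq1, hq⟩ := aux_contract W hWsymm hWnonneg hWone δ Δ hδΔ hΔ hWdiag f hf m M hm hmM
    hd2 α hα p pmin hpmin (fun i => (hp i).1) hpsum xstar hmin ρ lam Lam hρ hlam hLam ε hε hεle
  have hV : ∀ y, 0 ≤ Fobj W f α y - Fobj W f α xstar := fun y => sub_nonneg.2 (hmin y)
  have hp0 : ∀ i, 0 ≤ p i := fun i => hpmin.le.trans (hp i).1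
  have key := aux_prob (upd W f α p ε)
    (fun y => ENNReal.ofReal (Fobj W f α y - Fobj W f α xstar)) p (ENNReal.ofReal q)
    (by simpa using hq1) (fun _ => ENNReal.ofReal_ne_top)
    (fun y => by
      rw [← ENNReal.ofReal_mul hq0]
      refine le_trans (le_of_eq ?_) (ENNReal.ofReal_le_ofReal (hq y))
      rw [ENNReal.ofReal_sum_of_nonneg fun i _ => mul_nonneg (hp0 i) (hV _)]
      exact Finset.sum_congr rfl fun i _ => (ENNReal.ofReal_mul (hp0 i)).symm)
    μ I hImeas hIindep hIdist x0 X hX0 hXsucc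
  filter_upwards [key] with ω hω
  have h := (ENNReal.tendsto_toReal ENNReal.zero_ne_top).comp hω
  have h' : Filter.Tendsto (fun t => Fobj W f α (X t ω) - Fobj W f α xstar) Filter.atTop (nhds 0) := by
    refine h.congr fun t => ?_
    simp [ENNReal.toReal_ofReal (hV _)]
  simpa using h'.add_const (Fobj W f α xstar)
end
end

section
/- If the stepsize parameter satisfies 0 < ε ≤ 2π(λ/Λ)², then for every x ∈ ℝⁿ the expected one-step contraction holds: Σᵢ pᵢ (F(x^(i)) − F*) ≤ (1 − β)(F(x) − F*), where β = αmε(2πλ² − εΛ²)/(λπ). -/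
open Matrix BigOperators

noncomputable section

lemma tangent_aux (h h' : ℝ → ℝ) (h1 : ∀ s, HasDerivAt h (h' s) s)
    (hmono : Monotone h') (s y : ℝ) : h s + h' s * (y - s) ≤ h y := by
  have hc : ConvexOn ℝ Set.univ h := by
    apply MonotoneOn.convexOn_of_deriv convex_univ
    · exact fun z _ => (h1 z).continuousAt.continuousWithinAt
    · exact fun z _ => (h1 z).differentiableAt.differentiableWithinAt
    · intro a _ b _ hab
      rw [(h1 a).deriv, (h1 b).deriv]
      exact hmono hab
  rcases lt_trichotomy s y with hsy | hsy | hsy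
  · have := hc.le_slope_of_hasDerivAt (Set.mem_univ s) (Set.mem_univ y) hsy (h1 s)
    rw [slope_def_field, le_div_iff₀ (by linarith)] at this
    linarith
  · subst hsy; simp
  · have := hc.slope_le_of_hasDerivAt (Set.mem_univ y) (Set.mem_univ s) hsy (h1 s)
    rw [slope_def_field, div_le_iff₀ (by linarith)] at this
    linarith

lemma scalar_bounds (f : ℝ → ℝ) (hf : ContDiff ℝ 2 f) (m M : ℝ)
    (hd : ∀ s, m ≤ deriv (deriv f) s ∧ deriv (deriv f) s ≤ M) (s t : ℝ) :
    f s + deriv f s * t + m / 2 * t ^ 2 ≤ f (s + t) ∧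
    f (s + t) ≤ f s + deriv f s * t + M / 2 * t ^ 2 := by
  have hf1 : ∀ s, HasDerivAt f (deriv f s) s := fun s =>
    ((hf.differentiable (by norm_num)) s).hasDerivAt
  have hf' : ContDiff ℝ 1 (deriv f) := by
    have : ContDiff ℝ (1 + 1) f := by
      convert hf using 1
      norm_num
    exact (contDiff_succ_iff_deriv.1 this).2.2
  have hf2 : ∀ s, HasDerivAt (deriv f) (deriv (deriv f) s) s := fun s =>
    ((hf'.differentiable (by norm_num)) s).hasDerivAt
  constructor
  · have h := tangent_aux (fun s => f s - m / 2 * s ^ 2) (fun s => deriv f s - m * s)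
      (fun s => by
        have := (hf1 s).sub (((hasDerivAt_pow 2 s)).const_mul (m / 2))
        exact this.congr_deriv (by push_cast; ring))
      (by
        apply monotone_of_hasDerivAt_nonneg (f' := fun s => deriv (deriv f) s - m)
        · intro s
          have := (hf2 s).sub ((hasDerivAt_id s).const_mul m)
          exact this.congr_deriv (by ring)
        · intro s
          have := (hd s).1
          simpa using this) s (s + t)
    nlinarith [h]
  · have h := tangent_aux (fun s => M / 2 * s ^ 2 - f s) (fun s => M * s - deriv f s)
      (fun s => by
        have := (((hasDerivAt_pow 2 s)).const_mul (M / 2)).sub (hf1 s)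
        exact this.congr_deriv (by push_cast; ring))
      (by
        apply monotone_of_hasDerivAt_nonneg (f' := fun s => M - deriv (deriv f) s)
        · intro s
          have := ((hasDerivAt_id s).const_mul M).sub (hf2 s)
          exact this.congr_deriv (by ring)
        · intro s
          have := (hd s).2
          simpa using this) s (s + t)
    nlinarith [h]

lemma form_bound {n : ℕ} (V : Matrix (Fin n) (Fin n) ℝ) (hs : ∀ i j, V i j = V j i)
    (h0 : ∀ i j, 0 ≤ V i j) (y : Fin n → ℝ) (c : ℝ) (hc : c ^ 2 = 1) :
    0 ≤ ∑ i, (∑ j, V i j) * y i ^ 2 + c * ∑ i, ∑ j, V i j * y i * y j := by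
  have h1 : 0 ≤ ∑ i, ∑ j, V i j * (y i + c * y j) ^ 2 :=
    Finset.sum_nonneg fun i _ => Finset.sum_nonneg fun j _ =>
      mul_nonneg (h0 i j) (sq_nonneg _)
  have h2 : ∑ i, ∑ j, V i j * (y i + c * y j) ^ 2
      = ∑ i, ∑ j, V i j * y i ^ 2 + ∑ i, ∑ j, V i j * y j ^ 2
        + 2 * c * ∑ i, ∑ j, V i j * y i * y j := by
    simp only [Finset.mul_sum, ← Finset.sum_add_distrib]
    refine Finset.sum_congr rfl fun i _ => Finset.sum_congr rfl fun j _ => ?_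
    linear_combination V i j * y j ^ 2 * hc
  have h3 : ∑ i, ∑ j, V i j * y j ^ 2 = ∑ i, ∑ j, V i j * y i ^ 2 := by
    rw [Finset.sum_comm]
    exact Finset.sum_congr rfl fun i _ => Finset.sum_congr rfl fun j _ => by rw [hs]
  simp only [Finset.sum_mul]
  linarith

lemma Fobj_add {n : ℕ} (W : Matrix (Fin n) (Fin n) ℝ) (hW : W.IsSymm) (f : Fin n → ℝ → ℝ)
    (α : ℝ) (x h : Fin n → ℝ) :
    Fobj W f α (x + h) = Fobj W f α x + gvec W f α x ⬝ᵥ h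
      + (1 / 2) * (h ⬝ᵥ ((1 - W).mulVec h))
      + α * ∑ i, (f i (x i + h i) - f i (x i) - deriv (f i) (x i) * h i) := by
  have hs : (1 - W)ᵀ = 1 - W := by rw [transpose_sub, hW.eq, transpose_one]
  have h1 : x ⬝ᵥ ((1 - W).mulVec h) = h ⬝ᵥ ((1 - W).mulVec x) := by
    rw [dotProduct_mulVec, ← mulVec_transpose, hs, dotProduct_comm]
  have h2 : gvec W f α x ⬝ᵥ h = h ⬝ᵥ ((1 - W).mulVec x) + α * ∑ i, deriv (f i) (x i) * h i := by
    simp only [gvec, dotProduct, Finset.mul_sum, ← Finset.sum_add_distrib]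
    exact Finset.sum_congr rfl fun i _ => by ring
  rw [h2]
  simp only [Fobj, mulVec_add, add_dotProduct, dotProduct_add, h1, Finset.sum_sub_distrib,
    Pi.add_apply]
  ring

lemma Hhat_bounds {n : ℕ} (W : Matrix (Fin n) (Fin n) ℝ) (hWsymm : W.IsSymm)
    (hWnonneg : ∀ i j, 0 ≤ W i j)
    (hWone : W.mulVec (fun _ => 1) = fun _ => 1)
    (f : Fin n → ℝ → ℝ) (α : ℝ) (x : Fin n → ℝ) (lam Lam : ℝ)
    (hD : ∀ i, 0 < dEntry W f α x i)
    (hl : ∀ i, lam ≤ (dEntry W f α x i)⁻¹)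
    (hL : ∀ i, (dEntry W f α x i)⁻¹ + 2 * (1 - W i i) * ((dEntry W f α x i)⁻¹) ^ 2 ≤ Lam)
    (u : Fin n → ℝ) :
    lam * (u ⬝ᵥ u) ≤ u ⬝ᵥ ((Hhatinv W f α x).mulVec u) ∧
    u ⬝ᵥ ((Hhatinv W f α x).mulVec u) ≤ Lam * (u ⬝ᵥ u) := by
  set e : Fin n → ℝ := fun i => (dEntry W f α x i)⁻¹ with he
  set V : Matrix (Fin n) (Fin n) ℝ := fun i j => if i = j then 0 else W i j with hV
  have hrow : ∀ i, ∑ j, W i j = 1 := fun i => by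
    have := congrFun hWone i
    simpa [mulVec, dotProduct] using this
  have hVrow : ∀ i, ∑ j, V i j = 1 - W i i := fun i => by
    have : ∀ j, V i j = W i j - if i = j then W i j else 0 := fun j => by
      simp only [hV]; split_ifs <;> simp
    simp only [this, Finset.sum_sub_distrib, hrow]
    simp
  have hentry : ∀ i j, Hhatinv W f α x i j
      = (if i = j then e i + (1 - W i i) * e i ^ 2 else 0) + e i * V i j * e j := by
    intro i j
    have hs : ∀ k, (√(dEntry W f α x k))⁻¹ * (√(dEntry W f α x k))⁻¹ = e k := fun k => by
      rw [← mul_inv, Real.mul_self_sqrt (hD k).le]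
    have h1 : Hhatinv W f α x i j = (√(dEntry W f α x i))⁻¹ *
        ((1 : Matrix (Fin n) (Fin n) ℝ) i j + (√(dEntry W f α x i))⁻¹ * Bmat W i j *
          (√(dEntry W f α x j))⁻¹) * (√(dEntry W f α x j))⁻¹ := by
      simp only [Hhatinv, Dinvhalf, mul_diagonal, diagonal_mul, Matrix.add_apply]
    rw [h1]
    by_cases hij : i = j
    · subst hij
      simp only [Bmat, hV, Matrix.add_apply, Matrix.sub_apply, Matrix.smul_apply, diagonal_apply_eq, one_apply_eq,
        if_true, smul_eq_mul, ← hs i]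
      ring
    · simp only [Bmat, hV, Matrix.add_apply, Matrix.sub_apply, Matrix.smul_apply, diagonal_apply_ne _ hij,
        one_apply_ne hij, if_neg hij, smul_eq_mul, ← hs i, ← hs j]
      ring
  have hQ : u ⬝ᵥ ((Hhatinv W f α x).mulVec u) = ∑ i, e i * u i ^ 2
      + ∑ i, (∑ j, V i j) * (e i * u i) ^ 2
      + ∑ i, ∑ j, V i j * (e i * u i) * (e j * u j) := by
    simp only [dotProduct, mulVec, hentry, add_mul, Finset.sum_add_distrib, ite_mul, zero_mul,
      Finset.sum_ite_eq, Finset.mem_univ, if_true, hVrow, mul_add, Finset.mul_sum]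
    congr 1
    · rw [← Finset.sum_add_distrib, ← Finset.sum_add_distrib]
      exact Finset.sum_congr rfl fun i _ => by ring
    · exact Finset.sum_congr rfl fun i _ => Finset.sum_congr rfl fun j _ => by ring
  have hVs : ∀ i j, V i j = V j i := fun i j => by
    simp only [hV, eq_comm (a := j), hWsymm.apply j i]
  have hV0 : ∀ i j, 0 ≤ V i j := fun i j => by
    simp only [hV]; split_ifs
    · exact le_rfl
    · exact hWnonneg i j
  have b1 := form_bound V hVs hV0 (fun i => e i * u i) 1 (by norm_num)
  have b2 := form_bound V hVs hV0 (fun i => e i * u i) (-1) (by norm_num)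
  constructor
  · have : lam * (u ⬝ᵥ u) ≤ ∑ i, e i * u i ^ 2 := by
      simp only [dotProduct, Finset.mul_sum]
      refine Finset.sum_le_sum fun i _ => ?_
      nlinarith [mul_le_mul_of_nonneg_right (hl i) (sq_nonneg (u i))]
    linarith
  · have : ∑ i, e i * u i ^ 2 + 2 * ∑ i, (∑ j, V i j) * (e i * u i) ^ 2 ≤ Lam * (u ⬝ᵥ u) := by
      simp only [dotProduct, Finset.mul_sum, ← Finset.sum_add_distrib, hVrow]
      refine Finset.sum_le_sum fun i _ => ?_
      have := mul_le_mul_of_nonneg_right (hL i) (sq_nonneg (u i))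
      change (e i + 2 * (1 - W i i) * e i ^ 2) * u i ^ 2 ≤ _ at this
      nlinarith [this]
    linarith

lemma norm_bound {n : ℕ} (A : Matrix (Fin n) (Fin n) ℝ) (hA : Aᵀ = A) (L : ℝ) (hL : 0 < L)
    (h0 : ∀ u, 0 ≤ u ⬝ᵥ A.mulVec u) (h1 : ∀ u, u ⬝ᵥ A.mulVec u ≤ L * (u ⬝ᵥ u))
    (g : Fin n → ℝ) : A.mulVec g ⬝ᵥ A.mulVec g ≤ L ^ 2 * (g ⬝ᵥ g) := by
  set d := A.mulVec g with hd
  have h2 := h0 (d - L • g)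
  have hsym : g ⬝ᵥ A.mulVec d = d ⬝ᵥ d := by
    rw [dotProduct_mulVec, ← mulVec_transpose, hA]
  have h3 : (d - L • g) ⬝ᵥ A.mulVec (d - L • g)
      = d ⬝ᵥ A.mulVec d - 2 * L * (d ⬝ᵥ d) + L ^ 2 * (g ⬝ᵥ A.mulVec g) := by
    simp only [mulVec_sub, mulVec_smul, sub_dotProduct, dotProduct_sub, smul_dotProduct,
      dotProduct_smul, smul_eq_mul, hsym]
    rw [← hd]; ring
  rw [h3] at h2
  have h4 := h1 d
  have h5 := mul_le_mul_of_nonneg_left (h1 g) (sq_nonneg L)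
  have : L * (d ⬝ᵥ d) ≤ L * (L ^ 2 * (g ⬝ᵥ g)) := by nlinarith
  exact le_of_mul_le_mul_left this hL

lemma Hhat_symm {n : ℕ} (W : Matrix (Fin n) (Fin n) ℝ) (hWsymm : W.IsSymm)
    (f : Fin n → ℝ → ℝ) (α : ℝ) (x : Fin n → ℝ) :
    (Hhatinv W f α x)ᵀ = Hhatinv W f α x := by
  simp only [Hhatinv, Dinvhalf, Bmat, transpose_mul, transpose_add, transpose_sub, transpose_smul,
    transpose_one, diagonal_transpose, hWsymm.eq, Matrix.mul_assoc]

/-- Expected one-step contraction of the optimality gap: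
`Σᵢ pᵢ (F(x^(i)) − F*) ≤ (1 − β)(F(x) − F*)`. -/
theorem stmt7 (n : ℕ) (hn : 1 ≤ n)
    (W : Matrix (Fin n) (Fin n) ℝ) (hWsymm : W.IsSymm)
    (hWnonneg : ∀ i j, 0 ≤ W i j) (hWlt : ∀ i j, W i j < 1)
    (hWone : W.mulVec (fun _ => 1) = fun _ => 1)
    (hWnull : ∀ x : Fin n → ℝ, ((1 - W).mulVec x = 0 ↔ ∃ c : ℝ, x = fun _ => c))
    (δ Δ : ℝ) (hδ : 0 < δ) (hδΔ : δ ≤ Δ) (hΔ : Δ < 1)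
    (hWdiag : ∀ i, δ ≤ W i i ∧ W i i ≤ Δ)
    (f : Fin n → ℝ → ℝ) (hf : ∀ i, ContDiff ℝ 2 (f i))
    (hconv : ∀ i, ConvexOn ℝ Set.univ (f i))
    (m M : ℝ) (hm : 0 < m) (hmM : m ≤ M)
    (hd2 : ∀ i s, m ≤ d2 f i s ∧ d2 f i s ≤ M)
    (α : ℝ) (hα : 0 < α)
    (p : Fin n → ℝ) (pmin pmax : ℝ) (hpmin : 0 < pmin) (hpmax : pmax < 1)
    (hp : ∀ i, pmin ≤ p i ∧ p i ≤ pmax) (hpsum : ∑ i, p i = 1)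
    (xstar : Fin n → ℝ) (hmin : ∀ y, Fobj W f α xstar ≤ Fobj W f α y)
    (ρ lam Lam : ℝ) (hρ : ρ = 2 * (1 - δ) / (2 * (1 - δ) + α * m))
    (hlam : lam = 1 / (2 * (1 - δ) + α * M))
    (hLam : Lam = (1 + ρ) / (2 * (1 - Δ) + α * m))
    (ε : ℝ) (hε : 0 < ε) (hεle : ε ≤ 2 * pmin * (lam / Lam) ^ 2)
    (β : ℝ) (hβ : β = α * m * ε * (2 * pmin * lam ^ 2 - ε * Lam ^ 2) / (lam * pmin)) :
    ∀ x : Fin n → ℝ,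
      ∑ i, p i * (Fobj W f α (upd W f α p ε x i) - Fobj W f α xstar) ≤
        (1 - β) * (Fobj W f α x - Fobj W f α xstar) := by
  intro x
  have hMpos : 0 < M := lt_of_lt_of_le hm hmM
  have hαm : 0 < α * m := mul_pos hα hm
  have hαM : 0 < α * M := mul_pos hα hMpos
  have hδ1 : 0 < 1 - δ := by linarith
  have hΔ1 : 0 < 1 - Δ := by linarith
  have hlampos : 0 < lam := by rw [hlam]; positivity
  have hρpos : 0 < ρ := by rw [hρ]; positivity
  have hLampos : 0 < Lam := by rw [hLam]; positivity
  have hDlow : ∀ i, 2 * (1 - Δ) + α * m ≤ dEntry W f α x i := fun i => by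
    have := mul_le_mul_of_nonneg_left (hd2 i (x i)).1 hα.le
    have := (hWdiag i).2
    simp only [dEntry]; linarith
  have hDup : ∀ i, dEntry W f α x i ≤ 2 * (1 - δ) + α * M := fun i => by
    have := mul_le_mul_of_nonneg_left (hd2 i (x i)).2 hα.le
    have := (hWdiag i).1
    simp only [dEntry]; linarith
  have hD : ∀ i, 0 < dEntry W f α x i := fun i => lt_of_lt_of_le (by positivity) (hDlow i)
  have hb := Hhat_bounds W hWsymm hWnonneg hWone f α x lam Lam hD
    (fun i => by
      rw [hlam, one_div]
      exact inv_anti₀ (hD i) (hDup i))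
    (fun i => by
      have h1 : (dEntry W f α x i)⁻¹ ≤ (2 * (1 - Δ) + α * m)⁻¹ :=
        inv_anti₀ (by positivity) (hDlow i)
      have h2 : 2 * (1 - W i i) * (dEntry W f α x i)⁻¹ ≤ ρ := by
        rw [hρ, ← div_eq_mul_inv, div_le_div_iff₀ (hD i) (by positivity)]
        have ha := mul_le_mul_of_nonneg_left (hd2 i (x i)).1 hα.le
        have hb := (hWdiag i).1
        simp only [dEntry]
        nlinarith [mul_le_mul_of_nonneg_left ha hδ1.le, mul_nonneg hαm.le (sub_nonneg.2 hb)]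
      have h3 : 0 < (dEntry W f α x i)⁻¹ := inv_pos.2 (hD i)
      rw [hLam, div_eq_mul_inv]
      calc _ = (1 + 2 * (1 - W i i) * (dEntry W f α x i)⁻¹) * (dEntry W f α x i)⁻¹ := by ring
        _ ≤ (1 + ρ) * (2 * (1 - Δ) + α * m)⁻¹ :=
          mul_le_mul (by linarith) h1 h3.le (by linarith))
  have hnb := norm_bound (Hhatinv W f α x) (Hhat_symm W hWsymm f α x) Lam hLampos
    (fun u => le_trans (mul_nonneg hlampos.le
      (Finset.sum_nonneg fun i _ => mul_self_nonneg _)) (hb u).1)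
    (fun u => (hb u).2) (gvec W f α x)
  have hlow := (hb (gvec W f α x)).1
  set g := gvec W f α x with hg
  set d := (Hhatinv W f α x).mulVec g with hd
  have hsc := fun i s t => scalar_bounds (f i) (hf i) m M (fun s => hd2 i s) s t
  -- strong convexity
  have hPL : 2 * (α * m) * (Fobj W f α x - Fobj W f α xstar) ≤ g ⬝ᵥ g := by
    have hexp := Fobj_add W hWsymm f α x (xstar - x)
    rw [add_sub_cancel] at hexp
    set h := xstar - x with hh
    have hpsd : 0 ≤ h ⬝ᵥ ((1 - W).mulVec h) := by
      have hrow : ∀ i, ∑ j, W i j = 1 := fun i => by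
        have := congrFun hWone i
        simpa [mulVec, dotProduct] using this
      have := form_bound W (fun i j => (hWsymm.apply j i)) hWnonneg h (-1) (by norm_num)
      simp only [hrow] at this
      have e2 : h ⬝ᵥ ((1 - W).mulVec h) = ∑ i, 1 * h i ^ 2 + -1 * ∑ i, ∑ j, W i j * h i * h j := by
        rw [sub_mulVec, one_mulVec, dotProduct_sub]
        simp only [dotProduct, mulVec, Finset.mul_sum, sub_eq_add_neg, ← Finset.sum_neg_distrib]
        congr 1
        · exact Finset.sum_congr rfl fun i _ => by ring
        · exact Finset.sum_congr rfl fun i _ => Finset.sum_congr rfl fun j _ => by ring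
      rw [e2]; exact this
    have hsum : ∑ i, m / 2 * h i ^ 2 ≤
        ∑ i, (f i (x i + h i) - f i (x i) - deriv (f i) (x i) * h i) :=
      Finset.sum_le_sum fun i _ => by linarith [(hsc i (x i) (h i)).1]
    have hsum2 := mul_le_mul_of_nonneg_left hsum hα.le
    have hsq : 0 ≤ g ⬝ᵥ g + 2 * (α * m) * (g ⬝ᵥ h + α * ∑ i, m / 2 * h i ^ 2) := by
      have : g ⬝ᵥ g + 2 * (α * m) * (g ⬝ᵥ h + α * ∑ i, m / 2 * h i ^ 2)
          = ∑ i, (g i + α * m * h i) ^ 2 := by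
        simp only [dotProduct, Finset.mul_sum, ← Finset.sum_add_distrib]
        exact Finset.sum_congr rfl fun i _ => by ring
      rw [this]
      exact Finset.sum_nonneg fun i _ => sq_nonneg _
    have : Fobj W f α x - Fobj W f α xstar ≤ -(g ⬝ᵥ h + α * ∑ i, m / 2 * h i ^ 2) := by
      rw [hexp]; linarith
    nlinarith [mul_le_mul_of_nonneg_left this hαm.le]
  -- one-step descent
  have hstep : ∀ i, p i * (Fobj W f α (upd W f α p ε x i) - Fobj W f α xstar) ≤
      p i * (Fobj W f α x - Fobj W f α xstar) - ε * (g i * d i)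
        + ε ^ 2 / (2 * lam * pmin) * (d i * d i) := by
    intro i
    have hpi : 0 < p i := lt_of_lt_of_le hpmin (hp i).1
    set t : ℝ := -(ε / p i * d i) with ht
    have hu : upd W f α p ε x i = x + Pi.single i t := by
      ext j
      by_cases hj : j = i
      · subst hj
        simp only [upd, Function.update_self, Pi.add_apply, Pi.single_eq_same, ht]
        rw [← hg, ← hd]; ring
      · simp [upd, hj]
    have hexp := Fobj_add W hWsymm f α x (Pi.single i t)
    rw [← hu, ← hg] at hexp
    have hs1 : ∑ j, (f j (x j + (Pi.single i t : Fin n → ℝ) j) - f j (x j)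
        - deriv (f j) (x j) * (Pi.single i t : Fin n → ℝ) j)
        = f i (x i + t) - f i (x i) - deriv (f i) (x i) * t := by
      rw [Finset.sum_eq_single i]
      · simp
      · intro j _ hj
        simp [hj]
      · simp
    have hq : (Pi.single i t : Fin n → ℝ) ⬝ᵥ ((1 - W).mulVec (Pi.single i t))
        = (1 - W i i) * t ^ 2 := by
      simp
      ring
    rw [hs1, hq, dotProduct_single] at hexp
    have h1 := mul_le_mul_of_nonneg_left (hsc i (x i) t).2 hα.le
    have h2 : (1 - W i i) + α * M ≤ 1 / lam := by
      rw [hlam, one_div_one_div]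
      linarith [(hWdiag i).1]
    have h3 := mul_le_mul_of_nonneg_right h2 (sq_nonneg t)
    have h4 : Fobj W f α (upd W f α p ε x i) ≤ Fobj W f α x + g i * t + 1 / 2 * (1 / lam * t ^ 2) := by
      rw [hexp]; linarith
    have h5 : p i * (Fobj W f α (upd W f α p ε x i) - Fobj W f α xstar) ≤
        p i * (Fobj W f α x + g i * t + 1 / 2 * (1 / lam * t ^ 2) - Fobj W f α xstar) :=
      mul_le_mul_of_nonneg_left (by linarith) hpi.le
    have h6 : p i * (Fobj W f α x + g i * t + 1 / 2 * (1 / lam * t ^ 2) - Fobj W f α xstar)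
        = p i * (Fobj W f α x - Fobj W f α xstar) - ε * (g i * d i)
        + ε ^ 2 / (2 * lam * p i) * (d i * d i) := by
      rw [ht]; field_simp; ring
    have h7 : ε ^ 2 / (2 * lam * p i) * (d i * d i) ≤ ε ^ 2 / (2 * lam * pmin) * (d i * d i) := by
      apply mul_le_mul_of_nonneg_right _ (mul_self_nonneg _)
      apply div_le_div_of_nonneg_left (by positivity) (by positivity)
      exact mul_le_mul_of_nonneg_left (hp i).1 (by positivity)
    linarith
  have htot := Finset.sum_le_sum (s := Finset.univ) fun i _ => hstep i
  rw [Finset.sum_add_distrib, Finset.sum_sub_distrib, ← Finset.sum_mul, hpsum, ← Finset.mul_sum,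
    ← Finset.mul_sum] at htot
  change _ ≤ 1 * (Fobj W f α x - Fobj W f α xstar) - ε * (g ⬝ᵥ d)
    + ε ^ 2 / (2 * lam * pmin) * (d ⬝ᵥ d) at htot
  have k1 := mul_le_mul_of_nonneg_left hlow hε.le
  have k2 := mul_le_mul_of_nonneg_left hnb
    (show 0 ≤ ε ^ 2 / (2 * lam * pmin) by positivity)
  have hnn : 0 ≤ 2 * pmin * lam ^ 2 - ε * Lam ^ 2 := by
    have := mul_le_mul_of_nonneg_right hεle (sq_nonneg Lam)
    have e : 2 * pmin * (lam / Lam) ^ 2 * Lam ^ 2 = 2 * pmin * lam ^ 2 := by field_simp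
    linarith
  have k3 := mul_le_mul_of_nonneg_left hPL
    (show 0 ≤ ε * (2 * pmin * lam ^ 2 - ε * Lam ^ 2) / (2 * lam * pmin) by positivity)
  have e1 : ε * (2 * pmin * lam ^ 2 - ε * Lam ^ 2) / (2 * lam * pmin) * (g ⬝ᵥ g)
      = ε * (lam * (g ⬝ᵥ g)) - ε ^ 2 / (2 * lam * pmin) * (Lam ^ 2 * (g ⬝ᵥ g)) := by
    field_simp
  have e2 : ε * (2 * pmin * lam ^ 2 - ε * Lam ^ 2) / (2 * lam * pmin) *
      (2 * (α * m) * (Fobj W f α x - Fobj W f α xstar))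
      = β * (Fobj W f α x - Fobj W f α xstar) := by
    rw [hβ]; field_simp
  linarith
end
end
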